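/- arXiv:2110.08714 — 2 statements merged into one kernel-verified Lean document; each statement's English description precedes it below -/
import Mathlib

section
/- Let p be a prime, d > 0 an integer, and set g = d(p-1)/2. Assume d is even when p = 2, r ≤ ⌊d/2⌋, τ = r(p-1). Then in the large q limit (q ranging over powers of p), the proportion of admissible rational functions f ∈ S_g(F_q) whose Artin–Schreier cover has p-rank τ converges to M_p(r+1, d+2)/M_p(d+2). -/
open Polynomial

/-- `f` (a rational function over an algebraically closed field containing the base field)
is admissible with invariants `d` and `r`: it has a partial fraction decomposition
`f = c + Σ_{α ∈ B} f_α(1/(x-α))` where each `f_α` is a nonzero polynomial with zero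
constant term whose coefficient of `x^j` vanishes whenever `p ∣ j`, the number of poles
is `#B = r + 1`, and `d + 2 = Σ_{α ∈ B} (d_α + 1)` with `d_α = deg f_α` the pole orders.
(The genus of the associated Artin–Schreier cover `y^p - y = f` is then `d(p-1)/2` by
Riemann–Hurwitz and its `p`-rank is `r(p-1)` by Deuring–Shafarevich.) -/
def AdmissibleData (p : ℕ) {K : Type*} [Field K] (f : RatFunc K) (d r : ℕ) : Prop :=
  ∃ (c : K) (B : Finset K) (fα : K → Polynomial K),
    (∀ α ∈ B, fα α ≠ 0) ∧
    (∀ α ∈ B, (fα α).coeff 0 = 0) ∧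
    (∀ α ∈ B, ∀ j : ℕ, p ∣ j → (fα α).coeff j = 0) ∧
    f = RatFunc.C c + ∑ α ∈ B, Polynomial.aeval ((RatFunc.X - RatFunc.C α)⁻¹) (fα α) ∧
    B.card = r + 1 ∧
    d + 2 = ∑ α ∈ B, ((fα α).natDegree + 1)

/-- The base change of a rational function over `F` along a field embedding `φ : F → K`. -/
noncomputable def RatFunc.baseChange {F K : Type*} [Field F] [Field K] (φ : F →+* K)
    (f : RatFunc F) : RatFunc K :=
  algebraMap (Polynomial K) (RatFunc K) (f.num.map φ) /
    algebraMap (Polynomial K) (RatFunc K) (f.denom.map φ)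

/-- `#S_{g,τ}(F)`: the number of admissible rational functions over `F` of genus
`g = d(p-1)/2` and `p`-rank `τ = r(p-1)`. -/
noncomputable def SCount (p d r : ℕ) (F : Type) [Field F] : ℕ :=
  Nat.card {f : RatFunc F //
    AdmissibleData p (RatFunc.baseChange (algebraMap F (AlgebraicClosure F)) f) d r}

/-- `#S_g(F)`: the number of admissible rational functions over `F` of genus `g = d(p-1)/2`. -/
noncomputable def STotal (p d : ℕ) (F : Type) [Field F] : ℕ :=
  Nat.card {f : RatFunc F // ∃ r : ℕ,
    AdmissibleData p (RatFunc.baseChange (algebraMap F (AlgebraicClosure F)) f) d r}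

/-- `M_p(r+1, d+2)`: the number of partitions of `d+2` into exactly `r+1` parts,
each lying in `{2, …, p}`. -/
def Mp (p d r : ℕ) : ℕ :=
  (Finset.univ.filter (fun P : Nat.Partition (d + 2) =>
      Multiset.card P.parts = r + 1 ∧ ∀ i ∈ P.parts, 2 ≤ i ∧ i ≤ p)).card

/-- `M_p(d+2) = Σ_{r=0}^{⌊d/2⌋} M_p(r+1, d+2)`. -/
def MpTotal (p d : ℕ) : ℕ := ∑ r ∈ Finset.range (d / 2 + 1), Mp p d r

/-!
By uniqueness of partial fractions over an algebraic closure, an admissible function over `F_q` is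
a constant in `F_q` together with a Galois-invariant family of principal parts, and the numbers
`d_α + 1` form a partition of `d + 2` with one part for each pole. For a fixed partition `λ`, in
which `i` has multiplicity `k_i`, the poles with `d_α + 1 = i` are the roots of a monic polynomial
`D_i` over `F_q` of degree `k_i`, and their coefficients of `x^j`, for `j < i` prime to `p`, are the
values of a polynomial over `F_q` of degree less than `k_i`. So there are at most `q ^ N` families
of type `λ`, where `N` is the sum over the parts `i` of `1 + #{j < i : p ∤ j}`. This equals `d + 2`
when all parts are at most `p`, and is smaller otherwise.

If all parts lie in `{2, …, p}`, a choice of polynomials does give a family of type `λ` as soon as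
finitely many pairs of polynomials are coprime. Each condition fails with probability `O(1/q)`:
move along lines `P + t` with `Q` fixed, where for each root of `Q` at most one `t` is bad. Hence
each such partition contributes `q ^ (d + 3) (1 + o(1))` functions and every other one
`o(q ^ (d + 3))`, so the proportion of functions tends to the proportion of partitions.
-/

namespace ArtinSchreier

/-! ### Coprimality along lines -/

lemma card_mul_ncard_le_of_line {T V : Type*} [Finite T] [AddGroup V] [Finite V] (w : T → V)
    (S : Set V) (M : ℕ) (h : ∀ v, {t | v + w t ∈ S}.ncard ≤ M) :
    Nat.card T * S.ncard ≤ M * Nat.card V := by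
  classical
  have := Fintype.ofFinite T
  have := Fintype.ofFinite V
  rw [Nat.card_eq_fintype_card, Nat.card_eq_fintype_card, ← Finset.card_univ, ← Finset.card_univ,
    mul_comm M]
  refine Finset.card_mul_le_card_mul (fun t v => v + w t ∈ S) (fun t _ => ?_) (fun v _ => ?_)
  · have htranslate : (Finset.univ.filter fun v => v + w t ∈ S : Finset V).card = S.ncard := by
      rw [← Set.ncard_coe_finset, Finset.coe_filter_univ]
      exact Set.ncard_preimage_of_injective_subset_range (add_left_injective (w t))
        ((Equiv.addRight (w t)).surjective.range_eq ▸ Set.subset_univ S)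
    exact htranslate.ge
  · refine le_trans (le_of_eq ?_) (h v)
    rw [← Set.ncard_coe_finset, Finset.bipartiteBelow, Finset.coe_filter_univ]

lemma ncard_not_isCoprime_add_C_le {F : Type*} [Field F] (P : F[X]) {Q : F[X]} (hQ : Q ≠ 0) :
    {t : F | ¬ IsCoprime (P + C t) Q}.ncard ≤ Q.natDegree := by
  classical
  let K := AlgebraicClosure F
  let negValues : Finset K := (Q.aroots K).toFinset.image fun α => -aeval α P
  have hcard : negValues.card ≤ Q.natDegree :=
    Finset.card_image_le.trans <| (Multiset.toFinset_card_le _).trans <|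
      (card_roots' _).trans natDegree_map_le
  refine le_trans ?_ hcard
  rw [← Set.ncard_coe_finset negValues]
  refine Set.ncard_le_ncard_of_injOn (algebraMap F K) (fun t ht => ?_)
    (algebraMap F K).injective.injOn (Finset.finite_toSet _)
  rw [Set.mem_ofPred_eq, isCoprime_iff_aeval_ne_zero_of_isAlgClosed F K] at ht
  push Not at ht
  obtain ⟨α, hPα, hQα⟩ := ht
  rw [map_add, aeval_C] at hPα
  exact Finset.mem_image.2 ⟨α, Multiset.mem_toFinset.2 (mem_aroots.2 ⟨hQ, hQα⟩),
    neg_eq_of_add_eq_zero_right hPα⟩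

lemma card_mul_ncard_not_isCoprime_le {F V : Type*} [Field F] [Finite F] [AddGroup V] [Finite V]
    (w : F → V) {P Q : V → F[X]} {M : ℕ} (hP : ∀ v t, P (v + w t) = P v + C t)
    (hQ : ∀ v t, Q (v + w t) = Q v) (hQ0 : ∀ v, Q v ≠ 0) (hM : ∀ v, (Q v).natDegree ≤ M) :
    Nat.card F * {v | ¬ IsCoprime (P v) (Q v)}.ncard ≤ M * Nat.card V := by
  refine card_mul_ncard_le_of_line w _ M fun v => ?_
  simp only [Set.mem_ofPred_eq, hP, hQ]
  exact (ncard_not_isCoprime_add_C_le (P v) (hQ0 v)).trans (hM v)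

/-! ### Principal parts -/

section PrincipalParts

variable {K : Type*} [Field K]

/-- The rational function `c + ∑_α f_α(1/(x-α))` with constant term `c` and family of principal
parts `g : α ↦ f_α`. -/
noncomputable def ofPrincipalParts (c : K) (g : K →₀ K[X]) : RatFunc K :=
  RatFunc.C c + g.sum fun α P => aeval ((RatFunc.X - RatFunc.C α)⁻¹) P

lemma aeval_eq_sum_fin {A : Type*} [CommRing A] [Algebra K A] (y : A) {P : K[X]} {n : ℕ}
    (hP : P.coeff 0 = 0) (hn : P.natDegree ≤ n) :
    aeval y P = ∑ j : Fin n, algebraMap K A (P.coeff (j + 1)) * y ^ (j.1 + 1) := by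
  rw [aeval_eq_sum_range' (Nat.lt_succ_of_le hn), Finset.sum_range_succ', hP, zero_smul, add_zero,
    Finset.sum_range]
  simp only [Algebra.smul_def]

lemma ofPrincipalParts_eq_sum (c : K) {g : K →₀ K[X]} (hg : ∀ α, (g α).coeff 0 = 0)
    {s : Finset K} (hs : g.support ⊆ s) {n : ℕ} (hn : ∀ α, (g α).natDegree ≤ n) :
    ofPrincipalParts c g = algebraMap K[X] (RatFunc K) (C c) + ∑ α ∈ s, ∑ j : Fin n,
      algebraMap K[X] (RatFunc K) (C ((g α).coeff (j + 1))) *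
        ((RatFunc.X - RatFunc.C α)⁻¹) ^ (j.1 + 1) := by
  rw [ofPrincipalParts, Finsupp.sum_of_support_subset g hs _ fun α _ => map_zero _,
    RatFunc.algebraMap_C]
  congr 1
  refine Finset.sum_congr rfl fun α _ => ?_
  rw [aeval_eq_sum_fin _ (hg α) (hn α)]
  simp only [RatFunc.algebraMap_C, RatFunc.algebraMap_eq_C]

lemma ofPrincipalParts_injective {c c' : K} {g g' : K →₀ K[X]} (hg : ∀ α, (g α).coeff 0 = 0)
    (hg' : ∀ α, (g' α).coeff 0 = 0) (h : ofPrincipalParts c g = ofPrincipalParts c' g') :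
    c = c' ∧ g = g' := by
  classical
  let s := g.support ∪ g'.support
  let n := s.sup fun α => max (g α).natDegree (g' α).natDegree
  have hn (α : K) : max (g α).natDegree (g' α).natDegree ≤ n := by
    by_cases hα : α ∈ s
    · exact Finset.le_sup (f := fun α => max (g α).natDegree (g' α).natDegree) hα
    · simp only [s, Finset.mem_union, Finsupp.mem_support_iff, not_or, not_not] at hα
      simp [hα]
  have hinv (α : K) : (RatFunc.X - RatFunc.C α)⁻¹ * algebraMap K[X] (RatFunc K) (X - C α) = 1 := by
    rw [map_sub, RatFunc.algebraMap_X, RatFunc.algebraMap_C, inv_mul_cancel₀]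
    rw [← RatFunc.algebraMap_X, ← RatFunc.algebraMap_C, ← map_sub]
    exact RatFunc.algebraMap_ne_zero (X_sub_C_ne_zero α)
  have hdeg (a α : K) : (C a).degree < (X - C α : K[X]).degree := by
    rw [degree_X_sub_C]
    exact degree_C_lt
  rw [ofPrincipalParts_eq_sum c hg Finset.subset_union_left fun α => (le_max_left _ _).trans (hn α),
    ofPrincipalParts_eq_sum c' hg' Finset.subset_union_right
      fun α => (le_max_right _ _).trans (hn α)] at h
  obtain ⟨hc, hcoeff⟩ := quo_add_sum_rem_mul_pow_inverse_unique (s := s)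
    (fun α _ => monic_X_sub_C α)
    ((pairwise_coprime_X_sub_C Function.injective_id).set_pairwise _) (fun α _ => hinv α)
    (fun α _ _ => hdeg _ α) (fun α _ _ => hdeg _ α) h
  refine ⟨C_injective hc, Finsupp.ext fun α => Polynomial.ext fun j => ?_⟩
  rcases j with _ | j
  · rw [hg, hg']
  by_cases hj : α ∈ s ∧ j < n
  · exact C_injective (congrFun (hcoeff α hj.1) ⟨j, hj.2⟩)
  rcases not_and_or.1 hj with hα | hj
  · simp only [s, Finset.mem_union, Finsupp.mem_support_iff, not_or, not_not] at hα
    rw [hα.1, hα.2]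
  · have := max_le_iff.1 (hn α)
    rw [coeff_eq_zero_of_natDegree_lt (by omega), coeff_eq_zero_of_natDegree_lt (by omega)]

/-- The normalisation of admissible functions: no principal part has a monomial of degree
divisible by `p` (in particular none has a constant term). -/
def IsReduced (p : ℕ) (g : K →₀ K[X]) : Prop :=
  ∀ α j, p ∣ j → (g α).coeff j = 0

lemma IsReduced.coeff_zero {p : ℕ} {g : K →₀ K[X]} (hg : IsReduced p g) (α : K) :
    (g α).coeff 0 = 0 :=
  hg α 0 (dvd_zero p)

/-- The multiset of the numbers `d_α + 1`, where `α` runs over the poles and `d_α` is the pole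
order at `α`. -/
noncomputable def poleType (g : K →₀ K[X]) : Multiset ℕ :=
  g.support.val.map fun α => (g α).natDegree + 1

lemma IsReduced.two_le_of_mem_poleType {p : ℕ} {g : K →₀ K[X]} (hg : IsReduced p g) {i : ℕ}
    (hi : i ∈ poleType g) : 2 ≤ i := by
  obtain ⟨α, hα, rfl⟩ := Multiset.mem_map.1 hi
  by_contra! hlt
  have hconst := eq_C_of_natDegree_eq_zero (p := g α) (by omega)
  rw [hg.coeff_zero, C_0] at hconst
  exact Finsupp.mem_support_iff.1 hα hconst

/-- The poles `α` with `d_α + 1 = i`. -/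
noncomputable def poles (g : K →₀ K[X]) (i : ℕ) : Finset K :=
  g.support.filter fun α => (g α).natDegree + 1 = i

lemma mem_poles {g : K →₀ K[X]} {i : ℕ} {α : K} :
    α ∈ poles g i ↔ g α ≠ 0 ∧ (g α).natDegree + 1 = i := by
  simp [poles]

lemma mem_poles_self {g : K →₀ K[X]} {α : K} (hα : g α ≠ 0) :
    α ∈ poles g ((g α).natDegree + 1) :=
  mem_poles.2 ⟨hα, rfl⟩

lemma natDegree_succ_mem_poleType {g : K →₀ K[X]} {α : K} (hα : g α ≠ 0) :
    (g α).natDegree + 1 ∈ poleType g :=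
  Multiset.mem_map_of_mem _ (Finsupp.mem_support_iff.2 hα)

lemma count_poleType (g : K →₀ K[X]) (i : ℕ) : (poleType g).count i = (poles g i).card := by
  simp only [poleType, poles, Multiset.count_map, Finset.card_def, Finset.filter_val, eq_comm]

/-- The rational functions over `K` with a partial fraction decomposition that is reduced and of
pole type `lam`. -/
def HasPoleType (p : ℕ) (lam : Multiset ℕ) (f : RatFunc K) : Prop :=
  ∃ (c : K) (g : K →₀ K[X]), f = ofPrincipalParts c g ∧ IsReduced p g ∧ poleType g = lam

lemma HasPoleType.unique {p : ℕ} {lam lam' : Multiset ℕ} {f : RatFunc K}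
    (h : HasPoleType p lam f) (h' : HasPoleType p lam' f) : lam = lam' := by
  obtain ⟨c, g, rfl, hg, rfl⟩ := h
  obtain ⟨c', g', heq, hg', rfl⟩ := h'
  rw [(ofPrincipalParts_injective hg.coeff_zero hg'.coeff_zero heq).2]

lemma exists_hasPoleType_of_admissibleData {p d r : ℕ} {f : RatFunc K}
    (h : AdmissibleData p f d r) :
    ∃ lam : Nat.Partition (d + 2), lam.parts.card = r + 1 ∧ HasPoleType p lam.parts f := by
  classical
  obtain ⟨c, B, fα, hne, -, hred, rfl, hcard, hsum⟩ := h
  let g : K →₀ K[X] := Finsupp.indicator B fun α _ => fα α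
  have hgB {α : K} (hα : α ∈ B) : g α = fα α := Finsupp.indicator_of_mem hα _
  have hg0 {α : K} (hα : α ∉ B) : g α = 0 := Finsupp.indicator_of_notMem hα _
  have hsupp : g.support = B := by
    ext α
    rw [Finsupp.mem_support_iff]
    exact ⟨fun hα => by_contra fun hB => hα (hg0 hB), fun hB => hgB hB ▸ hne α hB⟩
  have htype : poleType g = B.val.map fun α => (fα α).natDegree + 1 := by
    rw [poleType, hsupp]
    exact Multiset.map_congr rfl fun α hα => by rw [hgB hα]
  refine ⟨⟨poleType g, fun hi => ?_, htype ▸ hsum.symm⟩, ?_, c, g, ?_, fun α j hj => ?_, rfl⟩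
  · obtain ⟨α, -, rfl⟩ := Multiset.mem_map.1 hi
    exact Nat.succ_pos _
  · exact (congrArg Multiset.card htype).trans ((Multiset.card_map _ _).trans hcard)
  · rw [ofPrincipalParts, Finsupp.sum, hsupp]
    congr 1
    exact Finset.sum_congr rfl fun α hα => by rw [hgB hα]
  · by_cases hα : α ∈ B
    · rw [hgB hα, hred α hα j hj]
    · rw [hg0 hα, coeff_zero]

lemma admissibleData_iff {p d r : ℕ} {f : RatFunc K} :
    AdmissibleData p f d r ↔
      ∃ lam : Nat.Partition (d + 2), lam.parts.card = r + 1 ∧ HasPoleType p lam.parts f := by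
  refine ⟨exists_hasPoleType_of_admissibleData, ?_⟩
  rintro ⟨lam, hcard, c, g, rfl, hred, htype⟩
  refine ⟨c, g.support, g, fun α => Finsupp.mem_support_iff.1, fun α _ => hred.coeff_zero α,
    fun α _ => hred α, rfl, ?_, ?_⟩
  · rw [← hcard, ← htype, poleType, Multiset.card_map, Finset.card_def]
  · rw [← lam.parts_sum, ← htype]
    rfl

lemma card_parts_pos {m : ℕ} (hm : m ≠ 0) (lam : Nat.Partition m) : 0 < lam.parts.card :=
  Multiset.card_pos.2 fun h => hm (by rw [← lam.parts_sum, h, Multiset.sum_zero])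

lemma exists_admissibleData_iff {p d : ℕ} {f : RatFunc K} :
    (∃ r, AdmissibleData p f d r) ↔
      ∃ lam : Nat.Partition (d + 2), HasPoleType p lam.parts f := by
  simp only [admissibleData_iff]
  refine ⟨fun ⟨_, lam, _, hf⟩ => ⟨lam, hf⟩, fun ⟨lam, hf⟩ => ⟨lam.parts.card - 1, lam, ?_, hf⟩⟩
  exact (Nat.sub_add_cancel (card_parts_pos (Nat.succ_ne_zero _) lam)).symm

end PrincipalParts

/-! ### Base change and Galois descent -/

section BaseChange

variable {F K L : Type*} [Field F] [Field K] [Field L]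

/-- `RatFunc.baseChange` as a ring homomorphism. -/
noncomputable def baseChangeHom (φ : F →+* K) : RatFunc F →+* RatFunc K :=
  RatFunc.mapRingHom (mapRingHom φ) <|
    nonZeroDivisors_le_comap_nonZeroDivisors_of_injective _ (map_injective φ φ.injective)

lemma baseChangeHom_apply (φ : F →+* K) (f : RatFunc F) :
    baseChangeHom φ f = RatFunc.baseChange φ f := by
  rw [baseChangeHom, RatFunc.coe_mapRingHom_eq_coe_map, RatFunc.map_apply]
  rfl

lemma baseChangeHom_algebraMap (φ : F →+* K) (P : F[X]) :
    baseChangeHom φ (algebraMap F[X] (RatFunc F) P) = algebraMap K[X] (RatFunc K) (P.map φ) := by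
  rw [baseChangeHom_apply, RatFunc.baseChange, RatFunc.num_algebraMap, RatFunc.denom_algebraMap,
    Polynomial.map_one, map_one, div_one]

lemma baseChangeHom_C (φ : F →+* K) (a : F) :
    baseChangeHom φ (RatFunc.C a) = RatFunc.C (φ a) := by
  rw [← RatFunc.algebraMap_C, baseChangeHom_algebraMap, map_C, RatFunc.algebraMap_C]

lemma baseChangeHom_X (φ : F →+* K) : baseChangeHom φ RatFunc.X = RatFunc.X := by
  rw [← RatFunc.algebraMap_X, baseChangeHom_algebraMap, map_X, RatFunc.algebraMap_X]

lemma baseChangeHom_comp (ψ : K →+* L) (φ : F →+* K) (f : RatFunc F) :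
    baseChangeHom ψ (baseChangeHom φ f) = baseChangeHom (ψ.comp φ) f := by
  rw [← RatFunc.num_div_denom f]
  simp only [map_div₀, baseChangeHom_algebraMap, Polynomial.map_map]

open scoped Classical in
lemma gcd_num_denom_map (φ : F →+* K) (f : RatFunc F) :
    gcd (f.num.map φ) (f.denom.map φ) = 1 := by
  rw [← normalize_gcd, normalize_eq_one]
  exact (gcd_isUnit_iff _ _).2 (f.isCoprime_num_denom.map (mapRingHom φ))

lemma denom_baseChangeHom (φ : F →+* K) (f : RatFunc F) :
    (baseChangeHom φ f).denom = f.denom.map φ := by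
  have hmonic := f.monic_denom.map φ
  rw [baseChangeHom_apply, RatFunc.baseChange, RatFunc.denom_div _ hmonic.ne_zero,
    gcd_num_denom_map, EuclideanDomain.div_one, hmonic.leadingCoeff, inv_one, C_1, one_mul]

lemma num_baseChangeHom (φ : F →+* K) (f : RatFunc F) :
    (baseChangeHom φ f).num = f.num.map φ := by
  rw [baseChangeHom_apply, RatFunc.baseChange, RatFunc.num_div, gcd_num_denom_map,
    EuclideanDomain.div_one, EuclideanDomain.div_one, (f.monic_denom.map φ).leadingCoeff, inv_one,
    C_1, one_mul]

/-- The image of a family of principal parts under an automorphism of the field, which acts on the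
poles and on the coefficients. -/
noncomputable def conjugate (σ : K ≃+* K) (g : K →₀ K[X]) : K →₀ K[X] :=
  (g.mapRange (Polynomial.map (σ : K →+* K)) (Polynomial.map_zero _)).equivMapDomain σ.toEquiv

lemma conjugate_apply_apply (σ : K ≃+* K) (g : K →₀ K[X]) (α : K) :
    conjugate σ g (σ α) = (g α).map (σ : K →+* K) := by
  simp [conjugate, Finsupp.equivMapDomain_apply]

lemma baseChangeHom_ofPrincipalParts (σ : K ≃+* K) (c : K) (g : K →₀ K[X]) :
    baseChangeHom (σ : K →+* K) (ofPrincipalParts c g) =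
      ofPrincipalParts (σ c) (conjugate σ g) := by
  rw [ofPrincipalParts, ofPrincipalParts, conjugate, map_add, baseChangeHom_C,
    Finsupp.sum_equivMapDomain, Finsupp.sum_mapRange_index fun _ => map_zero _, map_finsuppSum]
  congr 1
  refine Finsupp.sum_congr fun α _ => ?_
  rw [aeval_def, hom_eval₂, aeval_def, eval₂_map]
  congr 1
  · ext a
    simp [RatFunc.algebraMap_eq_C, baseChangeHom_C]
  · simp [baseChangeHom_X, baseChangeHom_C]

lemma IsReduced.conjugate {p : ℕ} {g : K →₀ K[X]} (hg : IsReduced p g) (σ : K ≃+* K) :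
    IsReduced p (conjugate σ g) := by
  intro β j hj
  obtain ⟨α, rfl⟩ := σ.surjective β
  rw [conjugate_apply_apply, coeff_map, hg α j hj, map_zero]

lemma apply_mem_poles_conjugate (σ : K ≃+* K) {g : K →₀ K[X]} {i : ℕ} {α : K} :
    σ α ∈ poles (conjugate σ g) i ↔ α ∈ poles g i := by
  rw [mem_poles, mem_poles, conjugate_apply_apply,
    Polynomial.map_ne_zero_iff (σ : K →+* K).injective, natDegree_map]

lemma poles_conjugate (σ : K ≃+* K) (g : K →₀ K[X]) (i : ℕ) :
    poles (conjugate σ g) i = (poles g i).map σ.toEquiv.toEmbedding := by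
  ext β
  obtain ⟨α, rfl⟩ := σ.surjective β
  rw [apply_mem_poles_conjugate]
  exact (Finset.mem_map' σ.toEquiv.toEmbedding).symm

lemma poleType_conjugate (σ : K ≃+* K) (g : K →₀ K[X]) :
    poleType (conjugate σ g) = poleType g := by
  ext i
  rw [count_poleType, count_poleType, poles_conjugate, Finset.card_map]

end BaseChange

section Descent

variable {F K : Type*} [Field F] [Field K] [Algebra F K]

/-- The families of principal parts fixed by all `F`-automorphisms of `K`. -/
def IsGaloisInvariant (F : Type*) {K : Type*} [Field F] [Field K] [Algebra F K]
    (g : K →₀ K[X]) : Prop :=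
  ∀ σ : K ≃ₐ[F] K, conjugate (σ : K ≃+* K) g = g

lemma IsGaloisInvariant.apply_apply {g : K →₀ K[X]} (hg : IsGaloisInvariant F g) (σ : K ≃ₐ[F] K)
    (α : K) : g (σ α) = (g α).map (σ : K →+* K) := by
  conv_lhs => rw [← hg σ]
  exact conjugate_apply_apply (σ : K ≃+* K) g α

lemma IsGaloisInvariant.poles_map {g : K →₀ K[X]} (hg : IsGaloisInvariant F g) (σ : K ≃ₐ[F] K)
    (i : ℕ) : (poles g i).map σ.toEquiv.toEmbedding = poles g i :=
  (poles_conjugate (σ : K ≃+* K) g i).symm.trans (by rw [hg σ])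

lemma baseChangeHom_fixed (σ : K ≃ₐ[F] K) (f : RatFunc F) :
    baseChangeHom (σ : K →+* K) (baseChangeHom (algebraMap F K) f) =
      baseChangeHom (algebraMap F K) f := by
  rw [baseChangeHom_comp]
  congr 2
  exact σ.toAlgHom.comp_algebraMap

variable [IsGalois F K]

lemma exists_polynomial_map_eq_of_fixed {P : K[X]}
    (h : ∀ σ : K ≃ₐ[F] K, P.map (σ : K →+* K) = P) :
    ∃ Q : F[X], Q.map (algebraMap F K) = P := by
  rw [← mem_lifts, lifts_iff_coeff_lifts]
  intro n
  rw [InfiniteGalois.mem_range_algebraMap_iff_fixed]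
  intro σ
  exact (coeff_map _ n).symm.trans (congrArg (coeff · n) (h σ))

lemma exists_baseChangeHom_eq_of_fixed {f : RatFunc K}
    (h : ∀ σ : K ≃ₐ[F] K, baseChangeHom (σ : K →+* K) f = f) :
    ∃ f₀ : RatFunc F, baseChangeHom (algebraMap F K) f₀ = f := by
  obtain ⟨N, hN⟩ := exists_polynomial_map_eq_of_fixed (F := F) (P := f.num) fun σ => by
    rw [← num_baseChangeHom, h]
  obtain ⟨D, hD⟩ := exists_polynomial_map_eq_of_fixed (F := F) (P := f.denom) fun σ => by
    rw [← denom_baseChangeHom, h]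
  refine ⟨algebraMap _ _ N / algebraMap _ _ D, ?_⟩
  rw [map_div₀, baseChangeHom_algebraMap, baseChangeHom_algebraMap, hN, hD, RatFunc.num_div_denom]

lemma exists_baseChangeHom_eq_ofPrincipalParts_iff {p : ℕ} {c : K} {g : K →₀ K[X]}
    (hg : IsReduced p g) :
    (∃ f : RatFunc F, baseChangeHom (algebraMap F K) f = ofPrincipalParts c g) ↔
      c ∈ Set.range (algebraMap F K) ∧ IsGaloisInvariant F g := by
  have hbc (σ : K ≃ₐ[F] K) : baseChangeHom (σ : K →+* K) (ofPrincipalParts c g) =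
      ofPrincipalParts (σ c) (conjugate (σ : K ≃+* K) g) :=
    baseChangeHom_ofPrincipalParts (σ : K ≃+* K) c g
  constructor
  · rintro ⟨f, hf⟩
    have hfixed (σ : K ≃ₐ[F] K) : σ c = c ∧ conjugate (σ : K ≃+* K) g = g :=
      ofPrincipalParts_injective (hg.conjugate _).coeff_zero hg.coeff_zero <| by
        rw [← hbc, ← hf, baseChangeHom_fixed]
    exact ⟨(InfiniteGalois.mem_range_algebraMap_iff_fixed c).2 fun σ => (hfixed σ).1,
      fun σ => (hfixed σ).2⟩
  · rintro ⟨hc, hinv⟩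
    refine exists_baseChangeHom_eq_of_fixed fun σ => ?_
    rw [hbc, (InfiniteGalois.mem_range_algebraMap_iff_fixed c).1 hc σ, hinv σ]

/-- The Galois-invariant reduced families of principal parts of pole type `lam`. -/
abbrev InvariantParts (p : ℕ) (lam : Multiset ℕ) (F K : Type*) [Field F] [Field K]
    [Algebra F K] : Type _ :=
  {g : K →₀ K[X] // IsReduced p g ∧ poleType g = lam ∧ IsGaloisInvariant F g}

lemma nonempty_invariantParts_equiv_hasPoleType (p : ℕ) (lam : Multiset ℕ) :
    Nonempty (F × InvariantParts p lam F K ≃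
      {f : RatFunc F // HasPoleType p lam (RatFunc.baseChange (algebraMap F K) f)}) := by
  have hdescend (x : F × InvariantParts p lam F K) : ∃ f : RatFunc F,
      baseChangeHom (algebraMap F K) f = ofPrincipalParts (algebraMap F K x.1) x.2.1 :=
    (exists_baseChangeHom_eq_ofPrincipalParts_iff x.2.2.1).2 ⟨⟨x.1, rfl⟩, x.2.2.2.2⟩
  choose f hf using hdescend
  have htype (x : F × InvariantParts p lam F K) :
      HasPoleType p lam (RatFunc.baseChange (algebraMap F K) (f x)) :=
    ⟨_, _, (baseChangeHom_apply _ _).symm.trans (hf x), x.2.2.1, x.2.2.2.1⟩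
  refine ⟨Equiv.ofBijective (fun x => ⟨f x, htype x⟩) ⟨?_, ?_⟩⟩
  · intro x y hxy
    obtain ⟨hc, hg⟩ := ofPrincipalParts_injective x.2.2.1.coeff_zero y.2.2.1.coeff_zero
      ((hf x).symm.trans ((congrArg _ (congrArg Subtype.val hxy)).trans (hf y)))
    exact Prod.ext ((algebraMap F K).injective hc) (Subtype.ext hg)
  · rintro ⟨f', c, g, hf', hred, hlam⟩
    rw [← baseChangeHom_apply] at hf'
    obtain ⟨⟨c₀, rfl⟩, hinv⟩ :=
      (exists_baseChangeHom_eq_ofPrincipalParts_iff hred).1 ⟨f', hf'⟩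
    exact ⟨(c₀, ⟨g, hred, hlam, hinv⟩), Subtype.ext <|
      (baseChangeHom (algebraMap F K)).injective ((hf _).trans hf'.symm)⟩

end Descent

/-! ### The parameter space of a pole type -/

/-- The possible degrees of the monomials of a reduced principal part of degree `i - 1`. -/
def coeffIndex (p i : ℕ) : Finset ℕ :=
  {j ∈ Finset.range i | ¬ p ∣ j}

lemma mem_coeffIndex {p i j : ℕ} : j ∈ coeffIndex p i ↔ j < i ∧ ¬ p ∣ j := by
  rw [coeffIndex, Finset.mem_filter, Finset.mem_range]

/-- The parameter space of the invariant principal parts of pole type `lam`. For each part `i` of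
`lam`, of multiplicity `k`, it records the lower coefficients of the monic polynomial of degree `k`
vanishing at the poles `α` with `d_α + 1 = i`, and for each `j` the polynomial of degree less than
`k` that interpolates the coefficients of `x^j` in `f_α` at these poles. -/
abbrev Params (p : ℕ) (lam : Multiset ℕ) (F : Type*) [Field F] : Type _ :=
  (i : lam.toFinset) → degreeLT F (lam.count i.1) × (coeffIndex p i → degreeLT F (lam.count i.1))

section Params

variable {p : ℕ} {lam : Multiset ℕ} {F K : Type*} [Field F] [Field K] [Algebra F K]

/-- The monic polynomial whose roots are the poles `α` with `d_α + 1 = i`. -/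
noncomputable def Params.den (v : Params p lam F) (i : lam.toFinset) : F[X] :=
  X ^ lam.count i.1 + ((v i).1 : F[X])

/-- The polynomial whose values at the poles `α` with `d_α + 1 = i` are the coefficients of `x^j`
in `f_α`. -/
def Params.coeff (v : Params p lam F) (i : lam.toFinset) (j : coeffIndex p i) : F[X] :=
  (v i).2 j

lemma Params.monic_den (v : Params p lam F) (i : lam.toFinset) : (v.den i).Monic :=
  monic_X_pow_add (mem_degreeLT.1 (v i).1.2)

lemma Params.natDegree_den (v : Params p lam F) (i : lam.toFinset) :
    (v.den i).natDegree = lam.count i.1 := by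
  refine natDegree_eq_of_degree_eq_some ?_
  rw [den, degree_add_eq_left_of_degree_lt, degree_X_pow]
  rw [degree_X_pow]
  exact mem_degreeLT.1 (v i).1.2

lemma Params.degree_coeff_lt (v : Params p lam F) (i : lam.toFinset) (j : coeffIndex p i) :
    (v.coeff i j).degree < lam.count i.1 :=
  mem_degreeLT.1 ((v i).2 j).2

lemma Params.ext {v w : Params p lam F} (hden : ∀ i, v.den i = w.den i)
    (hcoeff : ∀ i j, v.coeff i j = w.coeff i j) : v = w :=
  funext fun i => Prod.ext (Subtype.ext (add_left_cancel (hden i)))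
    (funext fun j => Subtype.ext (hcoeff i j))

/-- The relation between a parameter and the family of principal parts it describes. -/
structure Represents (v : Params p lam F) (g : K →₀ K[X]) : Prop where
  map_den : ∀ i : lam.toFinset, (v.den i).map (algebraMap F K) = ∏ α ∈ poles g i, (X - C α)
  aeval_coeff : ∀ (i : lam.toFinset) (j : coeffIndex p i), ∀ α ∈ poles g i,
    aeval α (v.coeff i j) = (g α).coeff j

namespace Represents

variable {v w : Params p lam F} {g g' : K →₀ K[X]}

lemma mem_poles_iff (h : Represents v g) {i : lam.toFinset} {α : K} :
    α ∈ poles g i ↔ aeval α (v.den i) = 0 := by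
  rw [← eval_map_algebraMap, h.map_den, eval_prod, Finset.prod_eq_zero_iff]
  simp only [eval_sub, eval_X, eval_C, sub_eq_zero, exists_eq_right']

lemma params_unique (hv : Represents v g) (hw : Represents w g) (hlam : poleType g = lam) :
    v = w := by
  refine Params.ext (fun i => ?_) fun i j => ?_
  · exact map_injective _ (algebraMap F K).injective ((hv.map_den i).trans (hw.map_den i).symm)
  · have hcard : lam.count i.1 = (poles g i).card := by rw [← count_poleType, hlam]
    refine map_injective _ (algebraMap F K).injective ?_
    refine eq_of_degrees_lt_of_eval_finset_eq (poles g i) ?_ ?_ fun α hα => ?_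
    · rw [degree_map, ← hcard]
      exact v.degree_coeff_lt i j
    · rw [degree_map, ← hcard]
      exact w.degree_coeff_lt i j
    · rw [eval_map_algebraMap, eval_map_algebraMap, hv.aeval_coeff i j α hα,
        hw.aeval_coeff i j α hα]

lemma apply_eq_of_ne_zero (h : Represents v g) (h' : Represents v g') (hg : IsReduced p g)
    (hg' : IsReduced p g') (hlam : poleType g = lam) {α : K} (hα : g α ≠ 0) : g α = g' α := by
  let i : lam.toFinset :=
    ⟨(g α).natDegree + 1, Multiset.mem_toFinset.2 (hlam ▸ natDegree_succ_mem_poleType hα)⟩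
  have hmem : α ∈ poles g i := mem_poles_self hα
  have hmem' : α ∈ poles g' i := h'.mem_poles_iff.2 (h.mem_poles_iff.1 hmem)
  have hdeg : (g' α).natDegree + 1 = (g α).natDegree + 1 := (mem_poles.1 hmem').2
  ext j
  by_cases hpj : p ∣ j
  · rw [hg α j hpj, hg' α j hpj]
  by_cases hj : j < (g α).natDegree + 1
  · rw [← h.aeval_coeff i ⟨j, mem_coeffIndex.2 ⟨hj, hpj⟩⟩ α hmem,
      ← h'.aeval_coeff i ⟨j, mem_coeffIndex.2 ⟨hj, hpj⟩⟩ α hmem']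
  · rw [coeff_eq_zero_of_natDegree_lt (by omega), coeff_eq_zero_of_natDegree_lt (by omega)]

lemma parts_unique (h : Represents v g) (h' : Represents v g') (hg : IsReduced p g)
    (hg' : IsReduced p g') (hlam : poleType g = lam) (hlam' : poleType g' = lam) : g = g' := by
  ext1 α
  by_cases hα : g α = 0
  · by_cases hα' : g' α = 0
    · rw [hα, hα']
    · exact (h'.apply_eq_of_ne_zero h hg' hg hlam' hα').symm
  · exact h.apply_eq_of_ne_zero h' hg hg' hlam hα

lemma conjugate (h : Represents v g) (σ : K ≃ₐ[F] K) :
    Represents v (conjugate (σ : K ≃+* K) g) := by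
  have hσ : (σ : K →+* K).comp (algebraMap F K) = algebraMap F K := σ.toAlgHom.comp_algebraMap
  refine ⟨fun i => ?_, fun i j β hβ => ?_⟩
  · rw [poles_conjugate, Finset.prod_map, ← hσ, ← Polynomial.map_map, h.map_den i,
      Polynomial.map_prod]
    refine Finset.prod_congr rfl fun α _ => ?_
    rw [Polynomial.map_sub, map_X, map_C]
    rfl
  · obtain ⟨α, rfl⟩ := (σ : K ≃+* K).surjective β
    rw [conjugate_apply_apply, coeff_map,
      ← h.aeval_coeff i j α ((apply_mem_poles_conjugate (σ : K ≃+* K)).1 hβ)]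
    exact aeval_algHom_apply σ α (v.coeff i j)

lemma isGaloisInvariant (h : Represents v g) (hg : IsReduced p g) (hlam : poleType g = lam) :
    IsGaloisInvariant F g := fun σ =>
  (h.conjugate σ).parts_unique h (hg.conjugate _) hg ((poleType_conjugate _ g).trans hlam) hlam

end Represents

lemma IsGaloisInvariant.exists_den [IsGalois F K] {g : K →₀ K[X]} (hg : IsGaloisInvariant F g)
    (i : ℕ) : ∃ D : F[X], D.map (algebraMap F K) = ∏ α ∈ poles g i, (X - C α) := by
  refine exists_polynomial_map_eq_of_fixed fun σ => ?_
  conv_rhs => rw [← hg.poles_map σ i, Finset.prod_map]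
  rw [Polynomial.map_prod]
  refine Finset.prod_congr rfl fun α _ => ?_
  rw [Polynomial.map_sub, map_X, map_C]
  rfl

lemma IsGaloisInvariant.exists_coeff [IsGalois F K] {g : K →₀ K[X]} (hg : IsGaloisInvariant F g)
    (i j : ℕ) : ∃ h : F[X], h.degree < (poles g i).card ∧
      ∀ α ∈ poles g i, aeval α h = (g α).coeff j := by
  classical
  let h := Lagrange.interpolate (poles g i) id fun α => (g α).coeff j
  have hdeg : h.degree < (poles g i).card :=
    Lagrange.degree_interpolate_lt _ Function.injective_id.injOn
  have heval {α : K} (hα : α ∈ poles g i) : eval α h = (g α).coeff j :=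
    Lagrange.eval_interpolate_at_node (v := id) _ Function.injective_id.injOn hα
  obtain ⟨h₀, hh₀⟩ := exists_polynomial_map_eq_of_fixed (F := F) (P := h) fun σ => by
    refine Lagrange.eq_interpolate_of_eval_eq _ Function.injective_id.injOn
      (degree_map_le.trans_lt hdeg) fun β hβ => ?_
    rw [← hg.poles_map σ i, Finset.mem_map] at hβ
    obtain ⟨α, hα, rfl⟩ := hβ
    exact (eval_map_apply (f := (σ : K →+* K)) α).trans <| (congrArg σ (heval hα)).trans <|
      (coeff_map (σ : K →+* K) j).symm.trans (congrArg (Polynomial.coeff · j)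
        (hg.apply_apply σ α)).symm
  refine ⟨h₀, ?_, fun α hα => ?_⟩
  · rwa [← degree_map h₀ (algebraMap F K), hh₀]
  · rw [← eval_map_algebraMap, hh₀, heval hα]

lemma exists_represents [IsGalois F K] {g : K →₀ K[X]} (hg : IsGaloisInvariant F g)
    (hlam : poleType g = lam) : ∃ v : Params p lam F, Represents v g := by
  have hcard (i : ℕ) : lam.count i = (poles g i).card := by rw [← count_poleType, hlam]
  choose D hD using hg.exists_den
  choose h hh_deg hh using hg.exists_coeff
  have hmonic (i : ℕ) : (D i).Monic := by
    refine monic_of_injective (algebraMap F K).injective ?_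
    rw [hD]
    exact monic_prod_of_monic _ _ fun α _ => monic_X_sub_C α
  have hnatDegree (i : ℕ) : (D i).natDegree = lam.count i := by
    rw [← natDegree_map (algebraMap F K), hD, natDegree_finsetProd_X_sub_C_eq_card, hcard]
  have hlower (i : ℕ) : D i - X ^ lam.count i ∈ degreeLT F (lam.count i) := by
    have hdeg : (D i).degree = lam.count i := by
      rw [degree_eq_natDegree (hmonic i).ne_zero, hnatDegree]
    rw [mem_degreeLT, ← hdeg]
    exact degree_sub_lt_left (hdeg.trans (degree_X_pow _).symm) (hmonic i).ne_zero
      ((hmonic i).leadingCoeff.trans (monic_X_pow _).leadingCoeff.symm)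
  let v : Params p lam F := fun i => ⟨⟨_, hlower i⟩, fun j => ⟨h i j, mem_degreeLT.2 ?_⟩⟩
  · have hden (i : lam.toFinset) : v.den i = D i := add_sub_cancel _ _
    exact ⟨v, fun i => (hden i).symm ▸ hD i, fun i j => hh i j⟩
  · exact (hcard i).symm ▸ hh_deg i j

end Params

section Card

variable {p : ℕ} {lam : Multiset ℕ} {F K : Type*} [Field F] [Field K] [Algebra F K]

instance finite_degreeLT [Finite F] (n : ℕ) : Finite (degreeLT F n) :=
  Finite.of_equiv _ (degreeLTEquiv F n).symm.toEquiv

lemma natCard_degreeLT (n : ℕ) : Nat.card (degreeLT F n) = Nat.card F ^ n := by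
  rw [Nat.card_congr (degreeLTEquiv F n).toEquiv, Nat.card_fun, Nat.card_fin]

/-- The dimension of `Params p lam F`. -/
def paramDim (p : ℕ) (lam : Multiset ℕ) : ℕ :=
  ∑ i ∈ lam.toFinset, lam.count i * ((coeffIndex p i).card + 1)

variable (F) in
lemma natCard_params (p : ℕ) (lam : Multiset ℕ) :
    Nat.card (Params p lam F) = Nat.card F ^ paramDim p lam := by
  simp only [Params, Nat.card_pi, Nat.card_prod, natCard_degreeLT, Finset.prod_const,
    Finset.card_univ, Fintype.card_coe, ← pow_mul, ← pow_add, Finset.prod_pow_eq_pow_sum]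
  rw [paramDim, Finset.sum_coe_sort lam.toFinset fun i =>
    lam.count i + lam.count i * (coeffIndex p i).card]
  simp only [mul_add_one, add_comm]

lemma exists_injective_invariantParts_params [IsGalois F K] (p : ℕ) (lam : Multiset ℕ) :
    ∃ v : InvariantParts p lam F K → Params p lam F, Function.Injective v := by
  choose v hv using fun g : InvariantParts p lam F K => exists_represents g.2.2.2 g.2.2.1
  refine ⟨v, fun g g' heq => Subtype.ext ?_⟩
  exact (hv g).parts_unique (heq ▸ hv g') g.2.1 g'.2.1 g.2.2.1 g'.2.2.1

instance finite_invariantParts [IsGalois F K] [Finite F] (p : ℕ) (lam : Multiset ℕ) :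
    Finite (InvariantParts p lam F K) :=
  have ⟨_, hv⟩ := exists_injective_invariantParts_params p lam
  Finite.of_injective _ hv

lemma natCard_invariantParts_le [IsGalois F K] [Finite F] (p : ℕ) (lam : Multiset ℕ) :
    Nat.card (InvariantParts p lam F K) ≤ Nat.card F ^ paramDim p lam := by
  obtain ⟨v, hv⟩ := exists_injective_invariantParts_params (F := F) (K := K) p lam
  exact natCard_params F p lam ▸ Nat.card_le_card_of_injective v hv

end Card

/-! ### Generic parameters -/

section Generic

variable {p : ℕ} {lam : Multiset ℕ} {F K : Type*} [Field F] [Field K] [Algebra F K]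

/-- The open conditions under which a parameter describes a family of principal parts: the
prescribed poles are distinct, and at each of them the leading coefficient does not vanish. -/
structure IsGeneric (v : Params p lam F) : Prop where
  separable (i : lam.toFinset) : (v.den i).Separable
  isCoprime (i i' : lam.toFinset) (h : i ≠ i') : IsCoprime (v.den i) (v.den i')
  isCoprime_leading (i : lam.toFinset) (j : coeffIndex p i) (h : j.1 + 1 = i.1) :
    IsCoprime (v.coeff i j) (v.den i)

/-- The principal part at `α` prescribed by `v` when `α` is a root of `v.den i`. -/
noncomputable def Params.principalPart (v : Params p lam F) (i : lam.toFinset) (α : K) : K[X] :=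
  ∑ j : coeffIndex p i, monomial j.1 (aeval α (v.coeff i j))

lemma Params.coeff_principalPart (v : Params p lam F) (i : lam.toFinset) (j : coeffIndex p i)
    (α : K) : (v.principalPart i α).coeff j = aeval α (v.coeff i j) := by
  classical
  simp only [principalPart, finsetSum_coeff, coeff_monomial, Subtype.val_inj,
    Finset.sum_ite_eq', Finset.mem_univ, if_true]

lemma Params.coeff_principalPart_of_notMem (v : Params p lam F) (i : lam.toFinset) {n : ℕ}
    (hn : n ∉ coeffIndex p i) (α : K) : (v.principalPart i α).coeff n = 0 := by
  rw [principalPart, finsetSum_coeff]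
  refine Finset.sum_eq_zero fun j _ => coeff_monomial_of_ne _ ?_
  rintro rfl
  exact hn j.2

open scoped Classical in
/-- The family of principal parts prescribed by a parameter. -/
noncomputable def Params.principalParts (v : Params p lam F) (K : Type*) [Field K] [Algebra F K] :
    K →₀ K[X] :=
  ∑ i, Finsupp.indicator ((v.den i).aroots K).toFinset fun α _ => v.principalPart i α

variable {v : Params p lam F}

lemma Params.principalParts_eq_zero {α : K} (hα : ∀ i, aeval α (v.den i) ≠ 0) :
    v.principalParts K α = 0 := by
  classical
  rw [principalParts, Finsupp.finsetSum_apply]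
  refine Finset.sum_eq_zero fun i _ => Finsupp.indicator_of_notMem ?_ _
  rw [Multiset.mem_toFinset, mem_aroots]
  exact fun h => hα i h.2

namespace IsGeneric

lemma principalParts_apply (hv : IsGeneric v) {i : lam.toFinset} {α : K}
    (hα : aeval α (v.den i) = 0) : v.principalParts K α = v.principalPart i α := by
  classical
  rw [Params.principalParts, Finsupp.finsetSum_apply, Finset.sum_eq_single i]
  · refine Finsupp.indicator_of_mem (Multiset.mem_toFinset.2 ?_) _
    exact mem_aroots.2 ⟨(v.monic_den i).ne_zero, hα⟩
  · refine fun i' _ hi' => Finsupp.indicator_of_notMem (fun hmem => ?_) _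
    have hα' := (mem_aroots.1 (Multiset.mem_toFinset.1 hmem)).2
    exact (aeval_ne_zero_of_isCoprime (hv.isCoprime i' i hi') α).elim (· hα') (· hα)
  · exact fun h => absurd (Finset.mem_univ i) h

lemma isReduced (hv : IsGeneric v) : IsReduced p (v.principalParts K) := by
  intro α j hj
  by_cases hα : ∃ i, aeval α (v.den i) = 0
  · obtain ⟨i, hi⟩ := hα
    rw [hv.principalParts_apply hi]
    exact v.coeff_principalPart_of_notMem i (fun h => (mem_coeffIndex.1 h).2 hj) α
  · rw [Params.principalParts_eq_zero (not_exists.1 hα), coeff_zero]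

variable (hlam : ∀ i ∈ lam, ¬ p ∣ i - 1)
include hlam

lemma principalPart_ne_zero_and_natDegree (hv : IsGeneric v) {i : lam.toFinset} {α : K}
    (hα : aeval α (v.den i) = 0) :
    v.principalPart i α ≠ 0 ∧ (v.principalPart i α).natDegree + 1 = i := by
  have hi : ¬ p ∣ i.1 - 1 := hlam _ (Multiset.mem_toFinset.1 i.2)
  have hpos : i.1 - 1 ≠ 0 := fun h => hi (h ▸ dvd_zero p)
  let top : coeffIndex p i := ⟨i.1 - 1, mem_coeffIndex.2 ⟨by omega, hi⟩⟩
  have htop : (v.principalPart i α).coeff (i.1 - 1) ≠ 0 := by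
    refine (v.coeff_principalPart i top α).trans_ne ?_
    have hcop := hv.isCoprime_leading i top (Nat.sub_add_cancel (by omega))
    exact (aeval_ne_zero_of_isCoprime hcop α).resolve_right (· hα)
  have hle : (v.principalPart i α).natDegree ≤ i.1 - 1 :=
    natDegree_le_iff_coeff_eq_zero.2 fun n hn =>
      v.coeff_principalPart_of_notMem i (fun h => absurd (mem_coeffIndex.1 h).1 (by omega)) α
  refine ⟨fun h => htop (by rw [h, coeff_zero]), ?_⟩
  rw [natDegree_eq_of_le_of_coeff_ne_zero hle htop]
  omega

lemma mem_poles_iff (hv : IsGeneric v) {n : ℕ} {α : K} :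
    α ∈ poles (v.principalParts K) n ↔ ∃ i : lam.toFinset, i.1 = n ∧ aeval α (v.den i) = 0 := by
  rw [mem_poles]
  constructor
  · rintro ⟨hne, hdeg⟩
    obtain ⟨i, hi⟩ : ∃ i, aeval α (v.den i) = 0 := by
      contrapose! hne
      exact Params.principalParts_eq_zero hne
    rw [hv.principalParts_apply hi, (hv.principalPart_ne_zero_and_natDegree hlam hi).2] at hdeg
    exact ⟨i, hdeg, hi⟩
  · rintro ⟨i, rfl, hi⟩
    rw [hv.principalParts_apply hi]
    exact hv.principalPart_ne_zero_and_natDegree hlam hi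

lemma poles_val (hv : IsGeneric v) (i : lam.toFinset) :
    (poles (v.principalParts K) i).val = (v.den i).aroots K := by
  refine (Multiset.Nodup.ext (Finset.nodup _) (nodup_roots (hv.separable i).map)).2 fun α => ?_
  rw [Finset.mem_val, hv.mem_poles_iff hlam, ← aroots_def, mem_aroots,
    and_iff_right (v.monic_den i).ne_zero]
  exact ⟨fun ⟨_, hi', h⟩ => Subtype.ext hi' ▸ h, fun h => ⟨i, rfl, h⟩⟩

variable [IsAlgClosed K]

lemma represents (hv : IsGeneric v) : Represents v (v.principalParts K) where
  map_den i := by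
    rw [Finset.prod, hv.poles_val hlam]
    exact (IsAlgClosed.splits _).eq_prod_roots_of_monic ((v.monic_den i).map _)
  aeval_coeff i j α hα := by
    obtain ⟨i', hi', hroot⟩ := (hv.mem_poles_iff hlam).1 hα
    obtain rfl := Subtype.ext hi'
    rw [hv.principalParts_apply hroot, v.coeff_principalPart]

lemma poleType_principalParts (hv : IsGeneric v) : poleType (v.principalParts K) = lam := by
  ext n
  rw [count_poleType]
  by_cases hn : n ∈ lam
  · rw [Finset.card_def, hv.poles_val hlam ⟨n, Multiset.mem_toFinset.2 hn⟩, aroots,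
      ← (IsAlgClosed.splits _).natDegree_eq_card_roots, natDegree_map, v.natDegree_den]
  · rw [Multiset.count_eq_zero.2 hn, Finset.card_eq_zero, Finset.eq_empty_iff_forall_notMem]
    rintro α hα
    obtain ⟨i, rfl, -⟩ := (hv.mem_poles_iff hlam).1 hα
    exact hn (Multiset.mem_toFinset.1 i.2)

end IsGeneric

lemma ncard_isGeneric_le [IsGalois F K] [IsAlgClosed K] [Finite F]
    (hlam : ∀ i ∈ lam, ¬ p ∣ i - 1) :
    {v : Params p lam F | IsGeneric v}.ncard ≤ Nat.card (InvariantParts p lam F K) := by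
  have hrep (v : {v : Params p lam F | IsGeneric v}) : Represents v.1 (v.1.principalParts K) :=
    v.2.represents hlam
  have htype (v : {v : Params p lam F | IsGeneric v}) : poleType (v.1.principalParts K) = lam :=
    v.2.poleType_principalParts hlam
  rw [← Nat.card_coe_set_eq]
  refine Nat.card_le_card_of_injective (fun v => ⟨v.1.principalParts K, v.2.isReduced, htype v,
    (hrep v).isGaloisInvariant v.2.isReduced (htype v)⟩) fun v w hvw => Subtype.ext ?_
  have heq : v.1.principalParts K = w.1.principalParts K := congrArg Subtype.val hvw
  exact (hrep v).params_unique (heq ▸ hrep w) (htype v)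

end Generic

section GenericityBound

variable {p : ℕ} {lam : Multiset ℕ} {F : Type*} [Field F]

lemma Params.den_add (v w : Params p lam F) (i : lam.toFinset) :
    (v + w).den i = v.den i + ((w i).1 : F[X]) :=
  (add_assoc _ _ _).symm

lemma Params.coeff_add (v w : Params p lam F) (i : lam.toFinset) (j : coeffIndex p i) :
    (v + w).coeff i j = v.coeff i j + ((w i).2 j : F[X]) :=
  rfl

lemma Params.natDegree_den_le_card (v : Params p lam F) (i : lam.toFinset) :
    (v.den i).natDegree ≤ lam.card :=
  (v.natDegree_den i).trans_le (Multiset.count_le_card _ _)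

lemma Params.coeff_den_count (v : Params p lam F) (i : lam.toFinset) :
    (v.den i).coeff (lam.count i.1) = 1 := by
  rw [← v.natDegree_den i]
  exact (v.monic_den i).coeff_natDegree

lemma C_mul_X_pow_mem_degreeLT {m n : ℕ} (hmn : m < n) (t : F) : C t * X ^ m ∈ degreeLT F n :=
  mem_degreeLT.2 <| (degree_C_mul_X_pow_le m t).trans_lt (Nat.cast_lt.2 hmn)

/-- The translation of parameters that adds `t * x ^ m` to `den i`. -/
noncomputable def denShift (p : ℕ) (i : lam.toFinset) {m : ℕ} (hm : m < lam.count i.1) (t : F) :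
    Params p lam F :=
  Pi.single i (⟨C t * X ^ m, C_mul_X_pow_mem_degreeLT hm t⟩, 0)

lemma den_add_denShift (v : Params p lam F) (i : lam.toFinset) {m : ℕ} (hm : m < lam.count i.1)
    (t : F) : (v + denShift p i hm t).den i = v.den i + C t * X ^ m := by
  rw [v.den_add, denShift, Pi.single_eq_same]

lemma den_add_denShift_of_ne (v : Params p lam F) {i i' : lam.toFinset} (hi : i' ≠ i) {m : ℕ}
    (hm : m < lam.count i.1) (t : F) : (v + denShift p i hm t).den i' = v.den i' := by
  rw [v.den_add, denShift, Pi.single_eq_of_ne hi, Prod.fst_zero, ZeroMemClass.coe_zero, add_zero]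

lemma count_pos (i : lam.toFinset) : 0 < lam.count i.1 :=
  Multiset.count_pos.2 (Multiset.mem_toFinset.1 i.2)

/-- The index type of the coprimality conditions in `IsGeneric`. -/
abbrev GenericityCondition (p : ℕ) (lam : Multiset ℕ) : Type :=
  lam.toFinset ⊕ (lam.toFinset × lam.toFinset) ⊕ (i : lam.toFinset) × coeffIndex p i

/-- The parameters violating a given condition. -/
def violating (F : Type*) [Field F] : GenericityCondition p lam → Set (Params p lam F)
  | .inl i => {v | ¬ (v.den i).Separable}
  | .inr (.inl (i, i')) => {v | i ≠ i' ∧ ¬ IsCoprime (v.den i) (v.den i')}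
  | .inr (.inr ⟨i, j⟩) => {v | ¬ IsCoprime (v.coeff i j) (v.den i)}

lemma setOf_not_isGeneric_subset :
    {v : Params p lam F | ¬ IsGeneric v} ⊆ ⋃ x, violating F x := by
  refine fun v hv => by_contra fun hmem => hv ?_
  have hv' (x : GenericityCondition p lam) : v ∉ violating F x := fun h =>
    hmem (Set.mem_iUnion.2 ⟨x, h⟩)
  refine ⟨fun i => ?_, fun i i' h => ?_, fun i j _ => ?_⟩
  · exact not_not.1 (hv' (.inl i))
  · exact not_not.1 fun hcop => hv' (.inr (.inl (i, i'))) ⟨h, hcop⟩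
  · exact not_not.1 (hv' (.inr (.inr ⟨i, j⟩)))

variable [Finite F]

lemma card_mul_ncard_not_isCoprime_den_le {i i' : lam.toFinset} (h : i ≠ i') :
    Nat.card F * {v : Params p lam F | ¬ IsCoprime (v.den i) (v.den i')}.ncard ≤
      lam.card * Nat.card (Params p lam F) :=
  card_mul_ncard_not_isCoprime_le (denShift p i (count_pos i))
    (fun v t => by rw [den_add_denShift, pow_zero, mul_one])
    (fun v t => den_add_denShift_of_ne v h.symm _ t)
    (fun v => (v.monic_den i').ne_zero) (fun v => v.natDegree_den_le_card i')

lemma card_mul_ncard_not_isCoprime_coeff_le (i : lam.toFinset) (j : coeffIndex p i) :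
    Nat.card F * {v : Params p lam F | ¬ IsCoprime (v.coeff i j) (v.den i)}.ncard ≤
      lam.card * Nat.card (Params p lam F) := by
  let shift (t : F) : Params p lam F :=
    Pi.single i (0, Pi.single j ⟨C t * X ^ 0, C_mul_X_pow_mem_degreeLT (count_pos i) t⟩)
  refine card_mul_ncard_not_isCoprime_le shift (fun v t => ?_) (fun v t => ?_)
    (fun v => (v.monic_den i).ne_zero) (fun v => v.natDegree_den_le_card i)
  · simp only [shift, v.coeff_add, Pi.single_eq_same, pow_zero, mul_one]
  · simp only [shift, v.den_add, Pi.single_eq_same, ZeroMemClass.coe_zero, add_zero]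

lemma card_mul_ncard_not_separable_le_of_ne_zero (i : lam.toFinset)
    (hk : (lam.count i.1 : F) ≠ 0) :
    Nat.card F * {v : Params p lam F | ¬ (v.den i).Separable}.ncard ≤
      lam.card * Nat.card (Params p lam F) := by
  obtain ⟨m, hm⟩ := Nat.exists_eq_succ_of_ne_zero (count_pos i).ne'
  refine card_mul_ncard_not_isCoprime_le (Q := fun v => derivative (v.den i))
    (denShift p i (count_pos i)) (fun v t => ?_) (fun v t => ?_) (fun v h => hk ?_)
    (fun v => ?_)
  · rw [den_add_denShift, pow_zero, mul_one]
  · rw [den_add_denShift, pow_zero, mul_one, derivative_add, derivative_C, add_zero]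
  · have hcoeff := congrArg (coeff · m) h
    have hlead := v.coeff_den_count i
    simp only [coeff_derivative, coeff_zero] at hcoeff
    rw [hm] at hlead ⊢
    rwa [hlead, one_mul, ← Nat.cast_succ] at hcoeff
  · exact ((natDegree_derivative_le _).trans (Nat.sub_le _ _)).trans (v.natDegree_den_le_card i)

/- When `k = deg D` vanishes in `F`, the derivative `D'` may vanish too. Moving along `D + tX`
instead translates `D'` by constants and fixes `D - X D'`, whose leading coefficient is `1 - k`. -/
lemma card_mul_ncard_not_separable_le_of_eq_zero (i : lam.toFinset)
    (hk : (lam.count i.1 : F) = 0) :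
    Nat.card F * {v : Params p lam F | ¬ (v.den i).Separable}.ncard ≤
      lam.card * Nat.card (Params p lam F) := by
  have hone : 1 < lam.count i.1 := by
    refine (Nat.succ_le_of_lt (count_pos i)).lt_of_ne fun h => one_ne_zero (α := F) ?_
    rw [← hk, ← h, Nat.succ_eq_add_one, zero_add, Nat.cast_one]
  let Q (v : Params p lam F) : F[X] := v.den i - X * derivative (v.den i)
  have hsep (v : Params p lam F) :
      (v.den i).Separable ↔ IsCoprime (derivative (v.den i)) (Q v) := by
    have hQ : Q v = v.den i + derivative (v.den i) * (-X) := by ring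
    rw [separable_def, isCoprime_comm, hQ, IsCoprime.add_mul_left_right_iff]
  simp only [hsep]
  refine card_mul_ncard_not_isCoprime_le (denShift p i hone) (fun v t => ?_) (fun v t => ?_)
    (fun v h => ?_) (fun v => ?_)
  · rw [den_add_denShift, pow_one, derivative_add, derivative_C_mul, derivative_X, mul_one]
  · simp only [Q, den_add_denShift, pow_one, derivative_add, derivative_C_mul, derivative_X]
    ring
  · obtain ⟨m, hm⟩ := Nat.exists_eq_succ_of_ne_zero (count_pos i).ne'
    have hcoeff := congrArg (coeff · (lam.count i.1)) h
    have hlead := v.coeff_den_count i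
    simp only [Q, coeff_sub, hlead, coeff_zero] at hcoeff
    rw [hm] at hcoeff hlead hk
    rw [coeff_X_mul, coeff_derivative, hlead, ← Nat.cast_succ, hk, mul_zero, sub_zero] at hcoeff
    exact one_ne_zero hcoeff
  · refine (natDegree_sub_le _ _).trans (max_le (v.natDegree_den_le_card i) ?_)
    calc (X * derivative (v.den i)).natDegree
        ≤ 1 + (lam.count i.1 - 1) := by
          refine natDegree_mul_le_of_le natDegree_X_le ?_
          exact v.natDegree_den i ▸ natDegree_derivative_le _
      _ = lam.count i.1 := Nat.add_sub_of_le (count_pos i)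
      _ ≤ lam.card := Multiset.count_le_card _ _

lemma card_mul_ncard_violating_le (x : GenericityCondition p lam) :
    Nat.card F * (violating F x).ncard ≤ lam.card * Nat.card (Params p lam F) := by
  rcases x with i | ⟨i, i'⟩ | ⟨i, j⟩
  · by_cases hk : (lam.count i.1 : F) = 0
    · exact card_mul_ncard_not_separable_le_of_eq_zero i hk
    · exact card_mul_ncard_not_separable_le_of_ne_zero i hk
  · by_cases h : i = i'
    · simp [violating, h]
    · simpa [violating, h] using card_mul_ncard_not_isCoprime_den_le h
  · exact card_mul_ncard_not_isCoprime_coeff_le i j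

/-- The constant in the bound `O(1/q)` for the proportion of parameters that are not generic. -/
def genericityConst (p : ℕ) (lam : Multiset ℕ) : ℕ :=
  Fintype.card (GenericityCondition p lam) * lam.card

lemma card_mul_ncard_not_isGeneric_le (p : ℕ) (lam : Multiset ℕ) :
    Nat.card F * {v : Params p lam F | ¬ IsGeneric v}.ncard ≤
      genericityConst p lam * Nat.card (Params p lam F) := by
  calc Nat.card F * {v : Params p lam F | ¬ IsGeneric v}.ncard
      ≤ Nat.card F * ∑ x : GenericityCondition p lam, (violating F x).ncard :=
        Nat.mul_le_mul_left _ <|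
          (Set.ncard_le_ncard setOf_not_isGeneric_subset (Set.toFinite _)).trans
            (Set.ncard_iUnion_le_of_fintype _)
    _ ≤ ∑ _x : GenericityCondition p lam, lam.card * Nat.card (Params p lam F) := by
        rw [Finset.mul_sum]
        exact Finset.sum_le_sum fun x _ => card_mul_ncard_violating_le x
    _ = genericityConst p lam * Nat.card (Params p lam F) := by
        rw [Finset.sum_const, Finset.card_univ, smul_eq_mul, genericityConst, mul_assoc]

end GenericityBound

/-! ### Counting -/

section Counting

lemma card_coeffIndex_succ_le (p : ℕ) {i : ℕ} (hi : 0 < i) : (coeffIndex p i).card + 1 ≤ i := by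
  have hsub : coeffIndex p i ⊆ (Finset.range i).erase 0 := fun j hj => by
    obtain ⟨hji, hpj⟩ := mem_coeffIndex.1 hj
    exact Finset.mem_erase.2 ⟨fun h => hpj (h ▸ dvd_zero p), Finset.mem_range.2 hji⟩
  have hcard := Finset.card_le_card hsub
  rw [Finset.card_erase_of_mem (Finset.mem_range.2 hi), Finset.card_range] at hcard
  lia

lemma card_coeffIndex_succ_lt {p i : ℕ} (hp : 0 < p) (hi : p < i) :
    (coeffIndex p i).card + 1 < i := by
  have hsub : coeffIndex p i ⊆ ((Finset.range i).erase 0).erase p := fun j hj => by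
    obtain ⟨hji, hpj⟩ := mem_coeffIndex.1 hj
    exact Finset.mem_erase.2 ⟨fun h => hpj h.symm.dvd, Finset.mem_erase.2
      ⟨fun h => hpj (h ▸ dvd_zero p), Finset.mem_range.2 hji⟩⟩
  have hcard := Finset.card_le_card hsub
  rw [Finset.card_erase_of_mem (Finset.mem_erase.2 ⟨hp.ne', Finset.mem_range.2 hi⟩),
    Finset.card_erase_of_mem (Finset.mem_range.2 (hp.trans hi)), Finset.card_range] at hcard
  lia

lemma card_coeffIndex_succ_eq {p i : ℕ} (hi : 0 < i) (hip : i ≤ p) :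
    (coeffIndex p i).card + 1 = i := by
  have heq : coeffIndex p i = (Finset.range i).erase 0 := by
    ext j
    simp only [mem_coeffIndex, Finset.mem_erase, Finset.mem_range]
    exact ⟨fun h => ⟨fun h0 => h.2 (h0 ▸ dvd_zero p), h.1⟩,
      fun h => ⟨h.2, Nat.not_dvd_of_pos_of_lt (Nat.pos_of_ne_zero h.1) (h.2.trans_le hip)⟩⟩
  rw [heq, Finset.card_erase_of_mem (Finset.mem_range.2 hi), Finset.card_range]
  lia

lemma paramDim_eq_sum {p : ℕ} {lam : Multiset ℕ} (hlam : ∀ i ∈ lam, 0 < i ∧ i ≤ p) :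
    paramDim p lam = lam.sum := by
  rw [paramDim, Finset.sum_multiset_count]
  refine Finset.sum_congr rfl fun i hi => ?_
  obtain ⟨hi0, hip⟩ := hlam i (Multiset.mem_toFinset.1 hi)
  rw [card_coeffIndex_succ_eq hi0 hip, smul_eq_mul]

lemma paramDim_lt_sum {p : ℕ} {lam : Multiset ℕ} (hp : 0 < p) (hlam : ∀ i ∈ lam, 0 < i)
    (hlarge : ∃ i ∈ lam, p < i) : paramDim p lam < lam.sum := by
  obtain ⟨i, hi, hpi⟩ := hlarge
  rw [paramDim, Finset.sum_multiset_count]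
  simp only [smul_eq_mul]
  exact Finset.sum_lt_sum
    (fun j hj => Nat.mul_le_mul_left _
      (card_coeffIndex_succ_le p (hlam j (Multiset.mem_toFinset.1 hj))))
    ⟨i, Multiset.mem_toFinset.2 hi,
      Nat.mul_lt_mul_of_pos_left (card_coeffIndex_succ_lt hp hpi) (Multiset.count_pos.2 hi)⟩

lemma natCard_exists_hasPoleType {F K : Type*} [Field F] [Field K] [Algebra F K] [IsGalois F K]
    [Finite F] (p : ℕ) {m : ℕ} (s : Finset (Nat.Partition m)) :
    Nat.card {f : RatFunc F //
        ∃ lam ∈ s, HasPoleType p lam.parts (RatFunc.baseChange (algebraMap F K) f)} =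
      Nat.card F * ∑ lam ∈ s, Nat.card (InvariantParts p lam.parts F K) := by
  have e (lam : s) := (nonempty_invariantParts_equiv_hasPoleType (F := F) (K := K) p
    lam.1.parts).some
  have hfinite (lam : s) : Finite {f : RatFunc F //
      HasPoleType p lam.1.parts (RatFunc.baseChange (algebraMap F K) f)} :=
    Finite.of_equiv _ (e lam)
  rw [Finset.mul_sum, ← Finset.sum_coe_sort s]
  simp only [← Nat.card_prod, Nat.card_congr (e _)]
  rw [← Nat.card_sigma]
  refine (Nat.card_eq_of_bijective (fun x => ⟨x.2.1, x.1.1, x.1.2, x.2.2⟩) ⟨?_, ?_⟩).symm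
  · rintro ⟨lam, f, hf⟩ ⟨lam', f', hf'⟩ h
    obtain rfl : f = f' := congrArg Subtype.val h
    obtain rfl : lam = lam' := Subtype.ext (Nat.Partition.ext (hf.unique hf'))
    rfl
  · rintro ⟨f, lam, hlam, hf⟩
    exact ⟨⟨⟨lam, hlam⟩, f, hf⟩, rfl⟩

/-- The number of Galois-invariant families of principal parts of pole type `lam` over an algebraic
closure of `F`. There are `#F` times as many rational functions of this pole type over `F`, one for
each value of the constant term. -/
noncomputable def typeCount (p : ℕ) (lam : Multiset ℕ) (F : Type*) [Field F] : ℕ :=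
  Nat.card (InvariantParts p lam F (AlgebraicClosure F))

variable {F : Type} [Field F] [Finite F]

lemma SCount_eq_card_mul_sum_typeCount (p d r : ℕ) :
    SCount p d r F = Nat.card F *
      ∑ lam : Nat.Partition (d + 2) with lam.parts.card = r + 1, typeCount p lam.parts F := by
  simp only [SCount, admissibleData_iff, typeCount, ← natCard_exists_hasPoleType,
    Finset.mem_filter_univ]

lemma STotal_eq_card_mul_sum_typeCount (p d : ℕ) :
    STotal p d F = Nat.card F * ∑ lam : Nat.Partition (d + 2), typeCount p lam.parts F := by
  simp only [STotal, exists_admissibleData_iff, typeCount, ← natCard_exists_hasPoleType,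
    Finset.mem_univ, true_and]

end Counting

/-! ### Asymptotics -/

section Asymptotics

open Filter Topology

variable {p : ℕ} {lam : Multiset ℕ}

section Bounds

variable {F : Type*} [Field F]

lemma typeCount_eq_zero {i : ℕ} (hi : i ∈ lam) (hi2 : i < 2) : typeCount p lam F = 0 := by
  have : IsEmpty (InvariantParts p lam F (AlgebraicClosure F)) :=
    ⟨fun g => hi2.not_ge (g.2.1.two_le_of_mem_poleType (g.2.2.1.symm ▸ hi))⟩
  exact Nat.card_of_isEmpty

variable [Finite F]

lemma typeCount_le (p : ℕ) (lam : Multiset ℕ) : typeCount p lam F ≤ Nat.card F ^ paramDim p lam :=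
  natCard_invariantParts_le p lam

variable (F) in
lemma card_mul_le_card_mul_typeCount (hlam : ∀ i ∈ lam, ¬ p ∣ i - 1) :
    Nat.card F * Nat.card F ^ paramDim p lam ≤
      Nat.card F * typeCount p lam F + genericityConst p lam * Nat.card F ^ paramDim p lam := by
  have hgen : {v : Params p lam F | IsGeneric v}.ncard ≤ typeCount p lam F :=
    ncard_isGeneric_le hlam
  have hnongen := card_mul_ncard_not_isGeneric_le (F := F) p lam
  have hcompl := Set.ncard_add_ncard_compl {v : Params p lam F | IsGeneric v}
  rw [Set.compl_ofPred] at hcompl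
  rw [natCard_params] at hnongen hcompl
  calc Nat.card F * Nat.card F ^ paramDim p lam
      = Nat.card F * {v : Params p lam F | IsGeneric v}.ncard +
          Nat.card F * {v : Params p lam F | ¬ IsGeneric v}.ncard := by rw [← hcompl, mul_add]
    _ ≤ _ := add_le_add (Nat.mul_le_mul_left _ hgen) hnongen

end Bounds

variable {ι : Type*} {l : Filter ι} {F : ι → Type*} [∀ n, Field (F n)] [∀ n, Finite (F n)]

lemma tendsto_typeCount_div_of_le (hF : Tendsto (fun n => Nat.card (F n)) l atTop)
    (hlam : ∀ i ∈ lam, 2 ≤ i ∧ i ≤ p) :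
    Tendsto (fun n => (typeCount p lam (F n) : ℝ) / (Nat.card (F n) : ℝ) ^ lam.sum) l (𝓝 1) := by
  have hdim : paramDim p lam = lam.sum :=
    paramDim_eq_sum fun i hi => ⟨zero_lt_two.trans_le (hlam i hi).1, (hlam i hi).2⟩
  have hq (n : ι) : (0 : ℝ) < Nat.card (F n) := Nat.cast_pos.2 Nat.card_pos
  have hlower : Tendsto (fun n => 1 - (genericityConst p lam : ℝ) / Nat.card (F n)) l (𝓝 1) := by
    simpa only [sub_zero, Function.comp_apply] using tendsto_const_nhds.sub
      ((tendsto_natCast_atTop_atTop (R := ℝ).comp hF).const_div_atTop (genericityConst p lam : ℝ))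
  refine tendsto_of_tendsto_of_tendsto_of_le_of_le hlower tendsto_const_nhds
    (fun n => ?_) (fun n => ?_)
  · have hbound : (Nat.card (F n) * Nat.card (F n) ^ lam.sum : ℝ) ≤
        Nat.card (F n) * typeCount p lam (F n) +
          genericityConst p lam * Nat.card (F n) ^ lam.sum := by
      exact_mod_cast hdim ▸ card_mul_le_card_mul_typeCount (F n) fun i hi =>
        Nat.not_dvd_of_pos_of_lt (by grind) (by grind)
    have := hq n
    rw [sub_le_iff_le_add, div_add_div _ _ (by positivity) (by positivity),
      le_div_iff₀ (by positivity)]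
    linarith
  · have hle := typeCount_le (F := F n) p lam
    rw [hdim] at hle
    rw [div_le_one₀ (pow_pos (hq n) _)]
    exact_mod_cast hle

lemma tendsto_typeCount_div_of_lt (hF : Tendsto (fun n => Nat.card (F n)) l atTop) (hp : 0 < p)
    (hlam : ∀ i ∈ lam, 0 < i) (hlarge : ∃ i ∈ lam, p < i) :
    Tendsto (fun n => (typeCount p lam (F n) : ℝ) / (Nat.card (F n) : ℝ) ^ lam.sum) l (𝓝 0) := by
  have hq (n : ι) : (0 : ℝ) < Nat.card (F n) := Nat.cast_pos.2 Nat.card_pos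
  have hinv := tendsto_inv_atTop_zero.comp ((tendsto_natCast_atTop_atTop (R := ℝ)).comp hF)
  refine squeeze_zero (fun n => by positivity) (fun n => ?_) hinv
  have hle : typeCount p lam (F n) * Nat.card (F n) ≤ Nat.card (F n) ^ lam.sum :=
    calc typeCount p lam (F n) * Nat.card (F n)
        ≤ Nat.card (F n) ^ paramDim p lam * Nat.card (F n) :=
          Nat.mul_le_mul_right _ (typeCount_le p lam)
      _ = Nat.card (F n) ^ (paramDim p lam + 1) := (pow_succ _ _).symm
      _ ≤ Nat.card (F n) ^ lam.sum :=
          Nat.pow_le_pow_right Nat.card_pos (paramDim_lt_sum hp hlam hlarge)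
  rw [Function.comp_apply, Function.comp_apply, ← one_div,
    div_le_div_iff₀ (pow_pos (hq n) _) (hq n), one_mul]
  exact_mod_cast hle

lemma tendsto_typeCount_div (hF : Tendsto (fun n => Nat.card (F n)) l atTop) (hp : 0 < p)
    {m : ℕ} (lam : Nat.Partition m) :
    Tendsto (fun n => (typeCount p lam.parts (F n) : ℝ) / (Nat.card (F n) : ℝ) ^ m) l
      (𝓝 (if ∀ i ∈ lam.parts, 2 ≤ i ∧ i ≤ p then 1 else 0)) := by
  have hsum := lam.parts_sum
  split_ifs with hparts
  · simpa only [hsum] using tendsto_typeCount_div_of_le hF hparts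
  · push Not at hparts
    obtain ⟨i, hi, hbad⟩ := hparts
    rcases lt_or_ge i 2 with hi2 | hi2
    · simp only [typeCount_eq_zero hi hi2, Nat.cast_zero, zero_div, tendsto_const_nhds]
    · simpa only [hsum] using
        tendsto_typeCount_div_of_lt hF hp (fun _ => lam.parts_pos) ⟨i, hi, hbad hi2⟩

lemma tendsto_sum_typeCount_div (hF : Tendsto (fun n => Nat.card (F n)) l atTop) (hp : 0 < p)
    {m : ℕ} (s : Finset (Nat.Partition m)) :
    Tendsto (fun n => ((∑ lam ∈ s, typeCount p lam.parts (F n) : ℕ) : ℝ) /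
        (Nat.card (F n) : ℝ) ^ m) l
      (𝓝 (s.filter fun lam => ∀ i ∈ lam.parts, 2 ≤ i ∧ i ≤ p).card) := by
  simp only [Nat.cast_sum, Finset.sum_div, ← Finset.sum_boole]
  exact tendsto_finsetSum s fun lam _ => tendsto_typeCount_div hF hp lam

end Asymptotics

/-! ### Partitions -/

lemma card_parts_mem_Icc {m p : ℕ} (lam : Nat.Partition (m + 2))
    (hlam : ∀ i ∈ lam.parts, 2 ≤ i ∧ i ≤ p) : lam.parts.card ∈ Set.Icc 1 (m / 2 + 1) := by
  have hle : lam.parts.card • 2 ≤ lam.parts.sum :=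
    Multiset.card_nsmul_le_sum fun i hi => (hlam i hi).1
  rw [lam.parts_sum, smul_eq_mul] at hle
  exact ⟨card_parts_pos (Nat.succ_ne_zero _) lam, by lia⟩

lemma MpTotal_eq_card (p d : ℕ) :
    MpTotal p d = (Finset.univ.filter fun lam : Nat.Partition (d + 2) =>
      ∀ i ∈ lam.parts, 2 ≤ i ∧ i ≤ p).card := by
  rw [Finset.card_eq_sum_card_fiberwise (f := fun lam => lam.parts.card - 1)
    (t := Finset.range (d / 2 + 1))]
  · refine Finset.sum_congr rfl fun r _ => ?_
    rw [Finset.filter_filter, Mp]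
    congr 1
    ext lam
    rw [Finset.mem_filter_univ, Finset.mem_filter_univ, and_comm]
    refine and_congr_right fun hlam => ?_
    have := (card_parts_mem_Icc lam hlam).1
    lia
  · intro lam hlam
    have := (card_parts_mem_Icc lam (Finset.mem_filter_univ _ |>.1 hlam)).2
    exact Finset.mem_coe.2 (Finset.mem_range.2 (by lia))

lemma MpTotal_pos {p d : ℕ} (hp : 2 ≤ p) (h2 : p = 2 → Even d) : 0 < MpTotal p d := by
  suffices h : ∃ parts : Multiset ℕ, parts.sum = d + 2 ∧ ∀ i ∈ parts, 2 ≤ i ∧ i ≤ p by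
    obtain ⟨parts, hsum, hparts⟩ := h
    rw [MpTotal_eq_card, Finset.card_pos]
    exact ⟨⟨parts, fun hi => zero_lt_two.trans_le (hparts _ hi).1, hsum⟩,
      Finset.mem_filter_univ _ |>.2 hparts⟩
  rcases Nat.even_or_odd' d with ⟨m, rfl | rfl⟩
  · refine ⟨Multiset.replicate (m + 1) 2, ?_, fun i hi => ?_⟩
    · rw [Multiset.sum_replicate, smul_eq_mul]
      ring
    · rw [Multiset.eq_of_mem_replicate hi]
      exact ⟨le_rfl, hp⟩
  · have hp3 : 3 ≤ p := by
      have : p ≠ 2 := fun h => by simpa [Nat.even_add_one] using h2 h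
      lia
    refine ⟨3 ::ₘ Multiset.replicate m 2, ?_, ?_⟩
    · rw [Multiset.sum_cons, Multiset.sum_replicate, smul_eq_mul]
      ring
    · rw [Multiset.forall_mem_cons]
      refine ⟨⟨by lia, hp3⟩, fun i hi => ?_⟩
      rw [Multiset.eq_of_mem_replicate hi]
      exact ⟨le_rfl, hp⟩

lemma tendsto_natCard_galoisField (p : ℕ) [Fact p.Prime] :
    Filter.Tendsto (fun n : ℕ => Nat.card (GaloisField p (n + 1))) Filter.atTop Filter.atTop := by
  simp only [GaloisField.card p _ (Nat.succ_ne_zero _)]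
  exact (tendsto_pow_atTop_atTop_of_one_lt (Fact.out : p.Prime).one_lt).comp
    (Filter.tendsto_add_atTop_nat 1)

end ArtinSchreier

theorem geometric_p_rank_statistics_general {ι : Type*} {l : Filter ι} {F : ι → Type}
    [∀ n, Field (F n)] [∀ n, Finite (F n)]
    (hF : Filter.Tendsto (fun n => Nat.card (F n)) l Filter.atTop) {p : ℕ} (hp : 2 ≤ p) (d r : ℕ)
    (h2 : p = 2 → Even d) :
    Filter.Tendsto (fun n => (SCount p d r (F n) : ℝ) / STotal p d (F n)) l
      (nhds ((Mp p d r : ℝ) / MpTotal p d)) := by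
  have hp0 : 0 < p := zero_lt_two.trans_le hp
  have hnum := ArtinSchreier.tendsto_sum_typeCount_div hF hp0
    {lam : Nat.Partition (d + 2) | lam.parts.card = r + 1}
  have hden := ArtinSchreier.tendsto_sum_typeCount_div hF hp0
    (Finset.univ : Finset (Nat.Partition (d + 2)))
  rw [Finset.filter_filter, ← Mp] at hnum
  rw [← ArtinSchreier.MpTotal_eq_card] at hden
  have hpos : (MpTotal p d : ℝ) ≠ 0 := Nat.cast_ne_zero.2 (ArtinSchreier.MpTotal_pos hp h2).ne'
  refine (hnum.div hden hpos).congr fun n => ?_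
  have hq : (Nat.card (F n) : ℝ) ≠ 0 := Nat.cast_ne_zero.2 Nat.card_pos.ne'
  rw [Pi.div_apply, div_div_div_cancel_right₀ (pow_ne_zero _ hq),
    ArtinSchreier.SCount_eq_card_mul_sum_typeCount, ArtinSchreier.STotal_eq_card_mul_sum_typeCount,
    Nat.cast_mul, Nat.cast_mul, mul_div_mul_left _ _ hq]

/-- **Geometric problem** (Theorem `main`): for a fixed prime `p`, `d > 0` (with `d` even
when `p = 2`) and `r ≤ ⌊d/2⌋`, the proportion of admissible rational functions over `F_q`
of genus `g = d(p-1)/2` whose Artin–Schreier cover has `p`-rank `τ = r(p-1)` tends to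
`M_p(r+1, d+2) / M_p(d+2)` as `q = p^n → ∞`. -/
theorem geometric_p_rank_statistics (p : ℕ) [Fact p.Prime] (d r : ℕ)
    (hd : 0 < d) (hr : r ≤ d / 2) (h2 : p = 2 → Even d) :
    Filter.Tendsto
      (fun n : ℕ =>
        (SCount p d r (GaloisField p (n + 1)) : ℝ) / (STotal p d (GaloisField p (n + 1))))
      Filter.atTop (nhds ((Mp p d r : ℝ) / (MpTotal p d))) := by
  exact geometric_p_rank_statistics_general (ArtinSchreier.tendsto_natCard_galoisField p)
    (Fact.out : p.Prime).two_le d r h2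
end

section
/- Fix integers d > 0 and r with 0 ≤ r ≤ ⌊d/2⌋. As the prime p → ∞, with g = d(p-1)/2 and τ = r(p-1), the proportion of admissible rational functions over F_p of genus g whose Artin–Schreier cover has p-rank τ converges to T(r+1, d+2)/T(d+2). -/
open Polynomial

/-- `T(r+1, d+2)`: the number of partitions of `d+2` into exactly `r+1` parts, each `≥ 2`. -/
def T (d r : ℕ) : ℕ :=
  (Finset.univ.filter (fun P : Nat.Partition (d + 2) =>
      Multiset.card P.parts = r + 1 ∧ ∀ i ∈ P.parts, 2 ≤ i)).card

/-- `T(d+2) = Σ_{r=0}^{⌊d/2⌋} T(r+1, d+2)`. -/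
def TTotal (d : ℕ) : ℕ := ∑ r ∈ Finset.range (d / 2 + 1), T d r

/-!
When `p > d + 1`, every pole has order less than `p`, so the vanishing condition on the coefficients
is void, and over an algebraic closure admissibility only says that `f` has no pole at infinity and
that its pole orders, each increased by one, form a partition of `d + 2` into `r + 1` parts, all
at least two.

The fractions over a finite field `F` with `q` elements whose pole orders form the multiset `M` are
counted by writing the denominator as `∏ Q_e ^ e`, where the monic squarefree polynomial `Q_e`
collects the poles of order `e`; it has coefficients in `F` by Galois descent. Choosing the `Q_e`
and a numerator of degree at most `M.sum` gives `q ^ (M.sum + M.card + 1)` points. Such a point can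
only fail to come from a fraction of this type if a coprimality condition `IsCoprime A B` breaks
down; as a constant `c` varies, this happens for at most `B.natDegree` of the translates `A + c`,
hence for a proportion `O(1 / q)` of the points. So each partition of `d + 2` into parts at least
two contributes `q ^ (d + 3) * (1 - O(1 / q))`, and proportions of functions tend to proportions of
partitions.
-/

section RatFunc

variable {K : Type*} [Field K]

lemma num_denom_div_of_isCoprime {N D : K[X]} (h : IsCoprime N D) (hD : D.Monic) :
    (algebraMap K[X] (RatFunc K) N / algebraMap K[X] (RatFunc K) D).num = N ∧
      (algebraMap K[X] (RatFunc K) N / algebraMap K[X] (RatFunc K) D).denom = D := by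
  set x := algebraMap K[X] (RatFunc K) N / algebraMap K[X] (RatFunc K) D with hx
  have hcross : x.num * D = N * x.denom := (RatFunc.num_mul_eq_mul_denom_iff hD.ne_zero).2 hx
  have hdenom : x.denom = D :=
    eq_of_monic_of_associated x.monic_denom hD <| associated_of_dvd_dvd
      ((RatFunc.denom_dvd hD.ne_zero).2 ⟨N, hx⟩)
      (h.symm.dvd_of_dvd_mul_left (hcross ▸ Dvd.intro_left _ rfl))
  refine ⟨mul_right_cancel₀ hD.ne_zero ?_, hdenom⟩
  rw [hcross, hdenom]

lemma num_denom_baseChange {F : Type*} [Field F] (φ : F →+* K) (f : RatFunc F) :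
    (f.baseChange φ).num = f.num.map φ ∧ (f.baseChange φ).denom = f.denom.map φ :=
  num_denom_div_of_isCoprime ((isCoprime_map φ).2 f.isCoprime_num_denom) (f.monic_denom.map φ)

lemma intDegree_baseChange {F : Type*} [Field F] (φ : F →+* K) (f : RatFunc F) :
    (f.baseChange φ).intDegree = f.intDegree := by
  obtain ⟨hnum, hdenom⟩ := num_denom_baseChange φ f
  rw [RatFunc.intDegree, RatFunc.intDegree, hnum, hdenom, natDegree_map, natDegree_map]

lemma denom_add_of_isCoprime {x y : RatFunc K} (h : IsCoprime x.denom y.denom) :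
    (x + y).denom = x.denom * y.denom := by
  have hsum : x + y = algebraMap K[X] (RatFunc K) (x.num * y.denom + y.num * x.denom) /
      algebraMap K[X] (RatFunc K) (x.denom * y.denom) := by
    conv_lhs => rw [← x.num_div_denom, ← y.num_div_denom]
    rw [div_add_div _ _ (RatFunc.algebraMap_ne_zero x.denom_ne_zero)
      (RatFunc.algebraMap_ne_zero y.denom_ne_zero)]
    simp only [map_add, map_mul, mul_comm]
  rw [hsum]
  refine (num_denom_div_of_isCoprime (.mul_right ?_ ?_) (x.monic_denom.mul y.monic_denom)).2
  · exact IsCoprime.add_mul_right_left (x.isCoprime_num_denom.mul_left h.symm) _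
  · rw [add_comm]
    exact IsCoprime.add_mul_right_left (y.isCoprime_num_denom.mul_left h) _

lemma denom_sum_of_pairwise_isCoprime {ι : Type*} (s : Finset ι) (f : ι → RatFunc K)
    (h : (s : Set ι).Pairwise fun i j => IsCoprime (f i).denom (f j).denom) :
    (∑ i ∈ s, f i).denom = ∏ i ∈ s, (f i).denom := by
  classical
  induction s using Finset.induction_on with
  | empty => simp
  | insert i s hi ih =>
    have hs := ih (h.mono (by simp))
    rw [Finset.sum_insert hi, Finset.prod_insert hi, ← hs, denom_add_of_isCoprime]
    rw [hs]
    refine IsCoprime.prod_right fun j hj => h (by simp) (by simp [hj]) ?_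
    rintro rfl
    exact hi hj

lemma algebraMap_X_sub_C (α : K) :
    algebraMap K[X] (RatFunc K) (X - C α) = RatFunc.X - RatFunc.C α := by
  rw [map_sub, RatFunc.algebraMap_X, RatFunc.algebraMap_C]

lemma ratFunc_X_sub_C_ne_zero (α : K) : (RatFunc.X - RatFunc.C α : RatFunc K) ≠ 0 :=
  algebraMap_X_sub_C α ▸ RatFunc.algebraMap_ne_zero (X_sub_C_ne_zero α)

lemma aeval_inv_X_sub_C (α : K) (f : K[X]) :
    aeval (RatFunc.X - RatFunc.C α : RatFunc K)⁻¹ f =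
      algebraMap K[X] (RatFunc K) (f.reverse.comp (X - C α)) /
        algebraMap K[X] (RatFunc K) ((X - C α) ^ f.natDegree) := by
  let := invertibleOfNonzero (inv_ne_zero (ratFunc_X_sub_C_ne_zero α))
  have hreverse := eval₂_reverse_mul_pow (algebraMap K (RatFunc K))
    (RatFunc.X - RatFunc.C α : RatFunc K)⁻¹ f
  rw [invOf_eq_inv, inv_inv, inv_pow, ← div_eq_mul_inv] at hreverse
  rw [aeval_def, ← hreverse, comp, hom_eval₂, map_pow, algebraMap_X_sub_C]
  rfl

lemma denom_aeval_inv_X_sub_C (α : K) (f : K[X]) :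
    (aeval (RatFunc.X - RatFunc.C α : RatFunc K)⁻¹ f).denom = (X - C α) ^ f.natDegree := by
  rw [aeval_inv_X_sub_C]
  refine (num_denom_div_of_isCoprime ?_ ((monic_X_sub_C α).pow _)).2
  obtain rfl | hf := eq_or_ne f 0
  · simpa using isCoprime_one_right
  refine IsCoprime.pow_right (IsCoprime.symm ?_)
  rw [(irreducible_X_sub_C α).coprime_iff_not_dvd, dvd_iff_isRoot]
  simpa [← coeff_zero_eq_eval_zero] using hf

lemma denom_partialFraction (c : K) (B : Finset K) (f : K → K[X]) :
    (RatFunc.C c + ∑ α ∈ B, aeval (RatFunc.X - RatFunc.C α : RatFunc K)⁻¹ (f α)).denom =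
      ∏ α ∈ B, (X - C α) ^ (f α).natDegree := by
  rw [denom_add_of_isCoprime (by simp [isCoprime_one_left]), RatFunc.denom_C, one_mul,
    denom_sum_of_pairwise_isCoprime]
  · simp only [denom_aeval_inv_X_sub_C]
  · intro α _ β _ hαβ
    simp only [denom_aeval_inv_X_sub_C]
    exact (isCoprime_X_sub_C_of_isUnit_sub (sub_ne_zero.2 hαβ).isUnit).pow

open Classical in
lemma mem_integer_inftyValuation {f : RatFunc K} :
    f ∈ (RatFunc.inftyValuation K).integer ↔ f.intDegree ≤ 0 := by
  obtain rfl | hf := eq_or_ne f 0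
  · simp
  · rw [Valuation.mem_integer_iff, RatFunc.inftyValuation_apply,
      RatFunc.inftyValuation_of_nonzero _ hf, ← WithZero.exp_zero, WithZero.exp_le_exp]

lemma intDegree_aeval_inv_X_sub_C_nonpos (α : K) (f : K[X]) :
    (aeval (RatFunc.X - RatFunc.C α : RatFunc K)⁻¹ f).intDegree ≤ 0 := by
  classical
  have hinv : (RatFunc.X - RatFunc.C α : RatFunc K)⁻¹ ∈
      (RatFunc.inftyValuation K).integer := by
    rw [mem_integer_inftyValuation, RatFunc.intDegree_inv, ← algebraMap_X_sub_C,
      RatFunc.intDegree_polynomial, natDegree_X_sub_C]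
    simp
  rw [← mem_integer_inftyValuation, aeval_eq_sum_range]
  refine sum_mem fun i _ => ?_
  rw [Algebra.smul_def]
  exact mul_mem (mem_integer_inftyValuation.2 (by simp)) (pow_mem hinv i)

end RatFunc

section PartialFractions

variable {K : Type*} [Field K]

lemma intDegree_partialFraction_nonpos (c : K) (B : Finset K) (f : K → K[X]) :
    (RatFunc.C c + ∑ α ∈ B, aeval (RatFunc.X - RatFunc.C α : RatFunc K)⁻¹ (f α)).intDegree ≤
      0 := by
  classical
  rw [← mem_integer_inftyValuation]
  exact add_mem (mem_integer_inftyValuation.2 (by simp)) <| sum_mem fun α _ =>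
    mem_integer_inftyValuation.2 (intDegree_aeval_inv_X_sub_C_nonpos α _)

lemma exists_polynomial_add_partialFraction (N : K[X]) (B : Finset K) (n : K → ℕ) :
    ∃ (q : K[X]) (g : K → K[X]), (∀ α, (g α).coeff 0 = 0) ∧
      algebraMap K[X] (RatFunc K) N / algebraMap K[X] (RatFunc K) (∏ α ∈ B, (X - C α) ^ n α) =
        algebraMap K[X] (RatFunc K) q +
          ∑ α ∈ B, aeval (RatFunc.X - RatFunc.C α : RatFunc K)⁻¹ (g α) := by
  obtain ⟨q, r, hr, hsum⟩ := mul_prod_pow_inverse_eq_quo_add_sum_rem_mul_pow_inverse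
    (K := RatFunc K) (s := B) N (g := fun α => X - C α) (fun α _ => monic_X_sub_C α)
    (fun α _ β _ hαβ => isCoprime_X_sub_C_of_isUnit_sub (sub_ne_zero.2 hαβ).isUnit) n
    (gi := fun α => (RatFunc.X - RatFunc.C α)⁻¹)
    (fun α _ => by rw [algebraMap_X_sub_C, inv_mul_cancel₀ (ratFunc_X_sub_C_ne_zero α)])
  refine ⟨q, fun α => ∑ j : Fin (n α), C ((r α j).coeff 0) * X ^ (j.1 + 1), by simp, ?_⟩
  rw [div_eq_mul_inv, map_prod, ← Finset.prod_inv_distrib]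
  simp only [map_pow, algebraMap_X_sub_C, ← inv_pow]
  rw [hsum]
  congr 1
  refine Finset.sum_congr rfl fun α hα => ?_
  simp only [map_sum, map_mul, aeval_C, map_pow, aeval_X]
  refine Finset.sum_congr rfl fun j _ => ?_
  have hconst : r α j = C ((r α j).coeff 0) :=
    eq_C_of_degree_le_zero (Nat.WithBot.lt_one_iff_le_zero.1 (degree_X_sub_C α ▸ hr α hα j))
  conv_lhs => rw [hconst]
  rfl

lemma prod_X_sub_C_pow_rootMultiplicity [DecidableEq K] {D : K[X]} (hsplits : D.Splits)
    (hD : D.Monic) : ∏ α ∈ D.roots.toFinset, (X - C α) ^ D.rootMultiplicity α = D := by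
  rw [← prod_multiset_root_eq_finset_root, ← hsplits.eq_prod_roots_of_monic hD]

lemma rootMultiplicity_prod_pow {ι : Type*} (s : Finset ι) {Q : ι → K[X]} (e : ι → ℕ)
    (hQ : ∀ i ∈ s, Q i ≠ 0) (α : K) :
    (∏ i ∈ s, Q i ^ e i).rootMultiplicity α = ∑ i ∈ s, e i * (Q i).rootMultiplicity α := by
  classical
  rw [← count_roots, roots_prod _ _ (Finset.prod_ne_zero_iff.2 fun i hi => pow_ne_zero _ (hQ i hi)),
    Multiset.count_bind]
  simp [roots_pow]

lemma exists_partialFraction [DecidableEq K] {f : RatFunc K} (hsplits : f.denom.Splits)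
    (hf : f.intDegree ≤ 0) :
    ∃ (c : K) (g : K → K[X]), (∀ α, (g α).coeff 0 = 0) ∧
      (∀ α ∈ f.denom.roots.toFinset, (g α).natDegree = f.denom.rootMultiplicity α) ∧
      f = RatFunc.C c + ∑ α ∈ f.denom.roots.toFinset,
        aeval (RatFunc.X - RatFunc.C α : RatFunc K)⁻¹ (g α) := by
  obtain ⟨q, g, hg, hfrac⟩ := exists_polynomial_add_partialFraction f.num
    f.denom.roots.toFinset f.denom.rootMultiplicity
  rw [prod_X_sub_C_pow_rootMultiplicity hsplits f.monic_denom, f.num_div_denom] at hfrac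
  have hq : (algebraMap K[X] (RatFunc K) q).intDegree ≤ 0 := by
    rw [eq_sub_of_add_eq hfrac.symm, ← mem_integer_inftyValuation]
    exact sub_mem (mem_integer_inftyValuation.2 hf) <| sum_mem fun α _ =>
      mem_integer_inftyValuation.2 (intDegree_aeval_inv_X_sub_C_nonpos α _)
  rw [RatFunc.intDegree_polynomial, Nat.cast_nonpos] at hq
  rw [eq_C_of_natDegree_eq_zero hq, RatFunc.algebraMap_C] at hfrac
  refine ⟨q.coeff 0, g, hg, fun α hα => ?_, hfrac⟩
  conv_rhs => rw [hfrac, denom_partialFraction,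
    rootMultiplicity_prod_pow _ _ fun β _ => X_sub_C_ne_zero β]
  simp [rootMultiplicity_X_sub_C, hα]

end PartialFractions

section MultiplicityType

variable {K : Type*} [Field K]

lemma not_isRoot_of_isCoprime {P Q : K[X]} (h : IsCoprime P Q) {α : K} (hα : P.IsRoot α) :
    ¬Q.IsRoot α := fun hα' =>
  not_isUnit_X_sub_C α (h.isUnit_of_dvd' (dvd_iff_isRoot.2 hα) (dvd_iff_isRoot.2 hα'))

lemma rootMultiplicity_prod_pow_of_isRoot {ι : Type*} [Fintype ι] {Q : ι → K[X]} {e : ι → ℕ}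
    (hsep : ∀ i, (Q i).Separable) (hcop : Pairwise fun i j => IsCoprime (Q i) (Q j)) {i : ι}
    {α : K} (hα : (Q i).IsRoot α) : (∏ j, Q j ^ e j).rootMultiplicity α = e i := by
  rw [rootMultiplicity_prod_pow _ _ fun j _ => (hsep j).ne_zero, Fintype.sum_eq_single i]
  · rw [le_antisymm (rootMultiplicity_le_one_of_separable (hsep i) α)
      ((rootMultiplicity_pos (hsep i).ne_zero).2 hα), mul_one]
  · intro j hj
    rw [rootMultiplicity_eq_zero (not_isRoot_of_isCoprime (hcop hj.symm) hα), mul_zero]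

variable [DecidableEq K]

/-- The multiset of the multiplicities of the distinct roots of `D` in `K`. For the denominator of
a rational function over an algebraically closed field this is the multiset of its finite pole
orders. -/
noncomputable def multiplicityType (D : K[X]) : Multiset ℕ :=
  D.roots.toFinset.val.map fun α => D.rootMultiplicity α

lemma finset_sum_singleton_eq_map {ι β : Type*} (s : Finset ι) (n : ι → β) :
    ∑ i ∈ s, ({n i} : Multiset β) = s.val.map n := by
  rw [← Multiset.sum_map_singleton (s.val.map n), Multiset.map_map]
  rfl

lemma zero_notMem_multiplicityType (D : K[X]) : 0 ∉ multiplicityType D := by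
  simp only [multiplicityType, Multiset.mem_map, Finset.mem_val, Multiset.mem_toFinset, not_exists,
    not_and]
  intro α hα
  rw [← count_roots]
  exact (Multiset.count_pos.2 hα).ne'

lemma sum_multiplicityType {D : K[X]} (hD : D.Splits) :
    (multiplicityType D).sum = D.natDegree := by
  rw [hD.natDegree_eq_card_roots, ← Multiset.toFinset_sum_count_eq]
  simp only [count_roots]
  rfl

lemma toFinset_roots_prod_pow {ι : Type*} [Fintype ι] {Q : ι → K[X]} {e : ι → ℕ}
    (hQ : ∀ i, Q i ≠ 0) (he : ∀ i, e i ≠ 0) :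
    (∏ i, Q i ^ e i).roots.toFinset = Finset.univ.biUnion fun i => (Q i).roots.toFinset := by
  ext α
  have hprod : ∏ i, Q i ^ e i ≠ 0 := Finset.prod_ne_zero_iff.2 fun i _ => pow_ne_zero _ (hQ i)
  simp [hprod, hQ, he, eval_prod, Finset.prod_eq_zero_iff]

lemma multiplicityType_prod_pow {ι : Type*} [Fintype ι] {Q : ι → K[X]} {e : ι → ℕ}
    (hsplits : ∀ i, (Q i).Splits) (hsep : ∀ i, (Q i).Separable)
    (hcop : Pairwise fun i j => IsCoprime (Q i) (Q j)) (he : ∀ i, e i ≠ 0) :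
    multiplicityType (∏ i, Q i ^ e i) = ∑ i, (Q i).natDegree • {e i} := by
  have hdisj : Set.PairwiseDisjoint (Finset.univ : Finset ι) fun i => (Q i).roots.toFinset := by
    intro i _ j _ hij
    exact Multiset.disjoint_toFinset.2 <| Multiset.disjoint_left.2 fun hi hj =>
      not_isRoot_of_isCoprime (hcop hij) (isRoot_of_mem_roots hi) (isRoot_of_mem_roots hj)
  calc multiplicityType (∏ i, Q i ^ e i)
    _ = ∑ α ∈ (∏ i, Q i ^ e i).roots.toFinset, {(∏ i, Q i ^ e i).rootMultiplicity α} :=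
      (finset_sum_singleton_eq_map _ _).symm
    _ = ∑ i, ∑ α ∈ (Q i).roots.toFinset, {(∏ i, Q i ^ e i).rootMultiplicity α} := by
      rw [toFinset_roots_prod_pow (fun i => (hsep i).ne_zero) he, Finset.sum_biUnion hdisj]
    _ = ∑ i, ∑ α ∈ (Q i).roots.toFinset, {e i} := by
      refine Finset.sum_congr rfl fun i _ => Finset.sum_congr rfl fun α hα => ?_
      rw [rootMultiplicity_prod_pow_of_isRoot hsep hcop
        (isRoot_of_mem_roots (Multiset.mem_toFinset.1 hα))]
    _ = ∑ i, (Q i).natDegree • {e i} := by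
      simp only [Finset.sum_const, Multiset.toFinset_card_of_nodup (nodup_roots (hsep _)),
        (hsplits _).natDegree_eq_card_roots]

lemma multiplicityType_prod_X_sub_C_pow {B : Finset K} {n : K → ℕ} (hn : ∀ α ∈ B, n α ≠ 0) :
    multiplicityType (∏ α ∈ B, (X - C α) ^ n α) = B.val.map n := by
  rw [← Finset.prod_coe_sort, multiplicityType_prod_pow (Q := fun α : B => X - C α.1)
    (fun _ => Splits.X_sub_C _)
    (fun _ => separable_X_sub_C) (fun α β h => isCoprime_X_sub_C_of_isUnit_sub
      (sub_ne_zero.2 (Subtype.coe_ne_coe.2 h)).isUnit) fun α => hn α α.2]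
  simp only [natDegree_X_sub_C, one_smul, Finset.sum_coe_sort B fun α => ({n α} : Multiset ℕ)]
  exact finset_sum_singleton_eq_map B n

end MultiplicityType

section Admissible

variable {K : Type*} [Field K]

lemma natDegree_ne_zero_of_coeff_zero_eq_zero {f : K[X]} (hf : f ≠ 0) (h : f.coeff 0 = 0) :
    f.natDegree ≠ 0 := fun hdeg => hf <| by rw [eq_C_of_natDegree_eq_zero hdeg, h, C_0]

lemma coeff_eq_zero_of_dvd_of_natDegree_lt {f : K[X]} {p j : ℕ} (h : f.coeff 0 = 0)
    (hdeg : f.natDegree < p) (hj : p ∣ j) : f.coeff j = 0 := by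
  obtain rfl | hj0 := Nat.eq_zero_or_pos j
  · exact h
  · exact coeff_eq_zero_of_natDegree_lt (hdeg.trans_le (Nat.le_of_dvd hj0 hj))

theorem admissibleData_iff [IsAlgClosed K] [DecidableEq K] {p d r : ℕ} (hp : d + 1 < p)
    (f : RatFunc K) :
    AdmissibleData p f d r ↔ f.intDegree ≤ 0 ∧ (multiplicityType f.denom).card = r + 1 ∧
      (multiplicityType f.denom).sum + (multiplicityType f.denom).card = d + 2 := by
  constructor
  · rintro ⟨c, B, g, hg, hg0, -, rfl, hB, hd⟩
    refine ⟨intDegree_partialFraction_nonpos c B g, ?_⟩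
    rw [denom_partialFraction, multiplicityType_prod_X_sub_C_pow fun α hα =>
      natDegree_ne_zero_of_coeff_zero_eq_zero (hg α hα) (hg0 α hα), Multiset.card_map,
      Finset.card_val, hd, Finset.sum_add_distrib, Finset.sum_const, smul_eq_mul, mul_one]
    exact ⟨hB, rfl⟩
  · rintro ⟨hdeg, hcard, hsum⟩
    obtain ⟨c, g, hg0, hg, hf⟩ := exists_partialFraction (IsAlgClosed.splits f.denom) hdeg
    set B := f.denom.roots.toFinset
    rw [multiplicityType, Multiset.card_map, Finset.card_val] at hcard hsum
    have hgsum : ∑ α ∈ B, (g α).natDegree + B.card = d + 2 := by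
      rwa [Finset.sum_congr rfl hg]
    have hg_ne : ∀ α ∈ B, (g α).natDegree ≠ 0 := by
      intro α hα
      rw [hg α hα, ← count_roots]
      exact (Multiset.count_pos.2 (Multiset.mem_toFinset.1 hα)).ne'
    have hg_lt : ∀ α ∈ B, (g α).natDegree < p := by
      intro α hα
      have := Finset.single_le_sum (fun β _ => Nat.zero_le (g β).natDegree) hα
      lia
    refine ⟨c, B, g, fun α hα h0 => hg_ne α hα (by rw [h0, natDegree_zero]), fun α _ => hg0 α,
      fun α hα j => coeff_eq_zero_of_dvd_of_natDegree_lt (hg0 α) (hg_lt α hα), hf, hcard, ?_⟩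
    rw [← hgsum, Finset.sum_add_distrib, Finset.card_eq_sum_ones]

end Admissible

section MultiplicityFactor

variable {K : Type*} [Field K] [DecidableEq K]

/-- The monic polynomial whose roots, all simple, are the roots of `D` in `K` of multiplicity
exactly `e`; these are the pieces of the squarefree decomposition of a split polynomial. -/
noncomputable def multiplicityFactor (D : K[X]) (e : ℕ) : K[X] :=
  ∏ α ∈ D.roots.toFinset with D.rootMultiplicity α = e, (X - C α)

lemma monic_multiplicityFactor (D : K[X]) (e : ℕ) : (multiplicityFactor D e).Monic :=
  monic_prod_X_sub_C _ _

lemma natDegree_multiplicityFactor (D : K[X]) (e : ℕ) :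
    (multiplicityFactor D e).natDegree = (multiplicityType D).count e := by
  rw [multiplicityFactor, natDegree_finsetProd_X_sub_C_eq_card, multiplicityType,
    Multiset.count_map, ← Finset.filter_val, Finset.card_val]
  simp only [eq_comm]

lemma prod_multiplicityFactor_pow {D : K[X]} (hsplits : D.Splits) (hD : D.Monic) :
    ∏ e ∈ (multiplicityType D).toFinset, multiplicityFactor D e ^ e = D := by
  have hmem : ∀ α ∈ D.roots.toFinset, D.rootMultiplicity α ∈ (multiplicityType D).toFinset :=
    fun α hα => Multiset.mem_toFinset.2 (Multiset.mem_map_of_mem _ hα)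
  conv_rhs => rw [← prod_X_sub_C_pow_rootMultiplicity hsplits hD,
    ← Finset.prod_fiberwise_of_maps_to hmem]
  refine Finset.prod_congr rfl fun e _ => ?_
  rw [multiplicityFactor, ← Finset.prod_pow]
  exact Finset.prod_congr rfl fun α hα => by rw [(Finset.mem_filter.1 hα).2]

lemma multiplicityFactor_prod_pow {ι : Type*} [Fintype ι] {Q : ι → K[X]} {e : ι → ℕ}
    (hmonic : ∀ i, (Q i).Monic) (hsplits : ∀ i, (Q i).Splits) (hsep : ∀ i, (Q i).Separable)
    (hcop : Pairwise fun i j => IsCoprime (Q i) (Q j)) (he : ∀ i, e i ≠ 0)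
    (he_inj : e.Injective) (i : ι) : multiplicityFactor (∏ j, Q j ^ e j) (e i) = Q i := by
  have hroots : ((∏ j, Q j ^ e j).roots.toFinset.filter fun α =>
      (∏ j, Q j ^ e j).rootMultiplicity α = e i) = (Q i).roots.toFinset := by
    ext α
    rw [Finset.mem_filter, toFinset_roots_prod_pow (fun j => (hsep j).ne_zero) he,
      Finset.mem_biUnion]
    constructor
    · rintro ⟨⟨j, -, hj⟩, hα⟩
      rw [rootMultiplicity_prod_pow_of_isRoot hsep hcop
        (isRoot_of_mem_roots (Multiset.mem_toFinset.1 hj))] at hα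
      exact he_inj hα ▸ hj
    · intro hi
      exact ⟨⟨i, Finset.mem_univ i, hi⟩, rootMultiplicity_prod_pow_of_isRoot hsep hcop
        (isRoot_of_mem_roots (Multiset.mem_toFinset.1 hi))⟩
  conv_rhs => rw [(hsplits i).eq_prod_roots_of_monic (hmonic i)]
  rw [multiplicityFactor, hroots, Finset.prod, Multiset.toFinset_val, (nodup_roots (hsep i)).dedup]

lemma map_multiplicityFactor {L : Type*} [Field L] [DecidableEq L] (σ : K ≃+* L) (D : K[X])
    (e : ℕ) : (multiplicityFactor D e).map (σ : K →+* L) =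
      multiplicityFactor (D.map (σ : K →+* L)) e := by
  have hmult (α : K) : (D.map (σ : K →+* L)).rootMultiplicity (σ α) = D.rootMultiplicity α :=
    (eq_rootMultiplicity_map (f := (σ : K →+* L)) σ.injective α).symm
  rw [multiplicityFactor, multiplicityFactor, Polynomial.map_prod]
  refine Finset.prod_equiv σ.toEquiv (fun α => ?_) fun α _ => by simp
  simp only [Finset.mem_filter, Multiset.mem_toFinset, ← Multiset.count_pos, count_roots,
    RingEquiv.toEquiv_eq_coe, EquivLike.coe_coe, hmult]

end MultiplicityFactor

section GaloisDescent

variable {F K : Type*} [Field F] [Field K] [Algebra F K]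

lemma mem_lifts_of_forall_map_eq [IsGalois F K] {P : K[X]}
    (hP : ∀ σ : K ≃ₐ[F] K, P.map (σ : K →+* K) = P) : P ∈ lifts (algebraMap F K) := by
  rw [lifts_iff_coeff_lifts]
  intro n
  rw [InfiniteGalois.mem_range_algebraMap_iff_fixed]
  intro σ
  conv_rhs => rw [← hP σ, coeff_map]
  rfl

variable [DecidableEq K]

lemma exists_map_eq_multiplicityFactor [IsGalois F K] (D : F[X]) (e : ℕ) :
    ∃ Q : F[X], Q.Monic ∧
      Q.map (algebraMap F K) = multiplicityFactor (D.map (algebraMap F K)) e := by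
  have hfixed (σ : K ≃ₐ[F] K) : (multiplicityFactor (D.map (algebraMap F K)) e).map (σ : K →+* K) =
      multiplicityFactor (D.map (algebraMap F K)) e := by
    have hσ : (σ : K →+* K).comp (algebraMap F K) = algebraMap F K := RingHom.ext σ.commutes
    refine (map_multiplicityFactor (σ : K ≃+* K) _ e).trans ?_
    rw [map_map]
    exact congrArg (fun φ => multiplicityFactor (D.map φ) e) hσ
  obtain ⟨Q, hQ, -, hQ_monic⟩ := lifts_and_degree_eq_and_monic
    (mem_lifts_of_forall_map_eq hfixed) (monic_multiplicityFactor _ e)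
  exact ⟨Q, hQ_monic, hQ⟩

lemma exists_prod_pow_eq_of_splits_map [IsGalois F K] {D : F[X]} (hD : D.Monic)
    (hsplits : (D.map (algebraMap F K)).Splits) :
    ∃ Q : ℕ → F[X], (∀ e, (Q e).Monic) ∧
      (∀ e, (Q e).natDegree = (multiplicityType (D.map (algebraMap F K))).count e) ∧
      ∏ e ∈ (multiplicityType (D.map (algebraMap F K))).toFinset, Q e ^ e = D := by
  choose Q hQ_monic hQ using exists_map_eq_multiplicityFactor (K := K) D
  refine ⟨Q, hQ_monic, fun e => ?_, map_injective _ (algebraMap F K).injective ?_⟩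
  · rw [← natDegree_map (algebraMap F K), hQ, natDegree_multiplicityFactor]
  · simp only [Polynomial.map_prod, Polynomial.map_pow, hQ]
    exact prod_multiplicityFactor_pow hsplits (hD.map _)

end GaloisDescent

section Coprimality

variable {F : Type*} [Field F]

lemma ncard_not_isCoprime_add_C_le (A : F[X]) {B : F[X]} (hB : B ≠ 0) :
    {c : F | ¬IsCoprime (A + C c) B}.ncard ≤ B.natDegree := by
  classical
  set values := (B.aroots (AlgebraicClosure F)).toFinset.image fun α => -aeval α A
  have hmaps : ∀ c ∈ {c : F | ¬IsCoprime (A + C c) B},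
      algebraMap F (AlgebraicClosure F) c ∈ (values : Set (AlgebraicClosure F)) := by
    intro c hc
    rw [Set.mem_ofPred_eq, isCoprime_iff_aeval_ne_zero_of_isAlgClosed F (AlgebraicClosure F)] at hc
    push Not at hc
    obtain ⟨α, hA, hBα⟩ := hc
    rw [map_add, aeval_C, add_comm, add_eq_zero_iff_eq_neg] at hA
    exact Finset.mem_image.2 ⟨α, Multiset.mem_toFinset.2 (mem_aroots.2 ⟨hB, hBα⟩), hA.symm⟩
  calc {c : F | ¬IsCoprime (A + C c) B}.ncard
    _ ≤ (values : Set (AlgebraicClosure F)).ncard :=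
      Set.ncard_le_ncard_of_injOn _ hmaps (algebraMap F _).injective.injOn values.finite_toSet
    _ = values.card := Set.ncard_coe_finset values
    _ ≤ (B.aroots (AlgebraicClosure F)).toFinset.card := Finset.card_image_le
    _ ≤ (B.aroots (AlgebraicClosure F)).card := Multiset.toFinset_card_le _
    _ ≤ B.natDegree := card_roots_map_le_natDegree B

/- For each `x`, at most `b` of the translates `x + s c` violate coprimality; average over `x`. -/
lemma card_mul_ncard_not_isCoprime_le [Finite F] {V : Type*} [AddGroup V] [Finite V]
    {A B : V → F[X]} {s : F → V} {b : ℕ} (hA : ∀ x c, A (x + s c) = A x + C c)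
    (hB : ∀ x c, B (x + s c) = B x) (hB_ne : ∀ x, B x ≠ 0) (hb : ∀ x, (B x).natDegree ≤ b) :
    Nat.card F * {x : V | ¬IsCoprime (A x) (B x)}.ncard ≤ Nat.card V * b := by
  classical
  have := Fintype.ofFinite V
  have := Fintype.ofFinite F
  rw [Set.ncard_eq_toFinset_card', Nat.card_eq_fintype_card, Nat.card_eq_fintype_card]
  refine Finset.card_mul_le_card_mul (fun c x => ¬IsCoprime (A (x + s c)) (B (x + s c)))
    (fun c _ => ?_) fun x _ => ?_
  · refine Finset.card_le_card_of_injOn (· - s c) (fun x hx => ?_) sub_left_injective.injOn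
    simpa [Finset.bipartiteAbove] using hx
  · simp only [Finset.bipartiteBelow, hA, hB]
    refine le_trans (le_of_eq ?_) ((ncard_not_isCoprime_add_C_le (A x) (hB_ne x)).trans (hb x))
    rw [Set.ncard_eq_toFinset_card', Set.toFinset_ofPred]

lemma derivative_ne_zero_of_monic {Q : F[X]} (hQ : Q.Monic) (h : (Q.natDegree : F) ≠ 0) :
    derivative Q ≠ 0 := by
  have hdeg : Q.natDegree - 1 + 1 = Q.natDegree :=
    Nat.sub_add_cancel (Nat.pos_of_ne_zero fun h0 => h (by rw [h0, Nat.cast_zero]))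
  have hcoeff : (derivative Q).coeff (Q.natDegree - 1) = Q.natDegree := by
    rw [coeff_derivative, ← Nat.cast_add_one, hdeg, hQ.coeff_natDegree, one_mul]
  exact fun hzero => h (by rw [← hcoeff, hzero, coeff_zero])

end Coprimality

section Parametrization

variable {F : Type*} [Field F] {ι : Type*} {n : ℕ} {m : ι → ℕ}

/-- The parameter space of fractions `N / ∏ i, Q i ^ e i` with `N.natDegree ≤ n` and `Q i` monic of
degree `m i`: a point consists of `N` and of the lower-order parts of the `Q i`. -/
abbrev FractionParam (F : Type*) [Field F] {ι : Type*} (n : ℕ) (m : ι → ℕ) : Type _ :=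
  degreeLT F (n + 1) × ∀ i, degreeLT F (m i)

instance [Finite F] (k : ℕ) : Finite (degreeLT F k) :=
  Finite.of_equiv _ (degreeLTEquiv F k).symm.toEquiv

lemma C_mem_degreeLT {k : ℕ} (hk : k ≠ 0) (c : F) : C c ∈ degreeLT F k :=
  mem_degreeLT.2 (degree_C_le.trans_lt (mod_cast Nat.pos_of_ne_zero hk))

namespace FractionParam

/-- The monic polynomials `Q i` given by a point of the parameter space. -/
noncomputable def factor (x : FractionParam F n m) (i : ι) : F[X] := X ^ m i + (x.2 i).1

lemma monic_factor (x : FractionParam F n m) (i : ι) : (x.factor i).Monic :=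
  monic_X_pow_add (mem_degreeLT.1 (x.2 i).2)

lemma natDegree_factor (x : FractionParam F n m) (i : ι) : (x.factor i).natDegree = m i := by
  rw [factor, natDegree_add_eq_left_of_degree_lt, natDegree_X_pow]
  rw [degree_X_pow]
  exact mem_degreeLT.1 (x.2 i).2

lemma natDegree_prod_factor (x : FractionParam F n m) (s : Finset ι) :
    (∏ i ∈ s, x.factor i).natDegree = ∑ i ∈ s, m i := by
  rw [natDegree_prod_of_monic _ _ fun i _ => x.monic_factor i]
  simp only [natDegree_factor]

lemma eq_of_factor_eq {x y : FractionParam F n m} (hnum : x.1.1 = y.1.1)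
    (hfactor : ∀ i, x.factor i = y.factor i) : x = y :=
  Prod.ext (Subtype.ext hnum) <| funext fun i => Subtype.ext (add_left_cancel (hfactor i))

lemma exists_factor_eq {N : F[X]} {Q : ι → F[X]} (hN : N.natDegree ≤ n) (hQ : ∀ i, (Q i).Monic)
    (hm : ∀ i, (Q i).natDegree = m i) :
    ∃ x : FractionParam F n m, x.1.1 = N ∧ ∀ i, x.factor i = Q i := by
  have hlt (i : ι) : Q i - X ^ m i ∈ degreeLT F (m i) := by
    have hdegree : (Q i).degree = (X ^ m i : F[X]).degree := by
      rw [degree_X_pow, degree_eq_natDegree (hQ i).ne_zero, hm]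
    rw [mem_degreeLT, ← degree_X_pow (R := F)]
    exact degree_sub_lt_right hdegree (pow_ne_zero _ X_ne_zero)
      ((hQ i).leadingCoeff.trans (monic_X_pow _).leadingCoeff.symm)
  have hN' : N ∈ degreeLT F (n + 1) :=
    mem_degreeLT.2 (degree_le_natDegree.trans_lt (mod_cast Nat.lt_succ_of_le hN))
  exact ⟨⟨⟨N, hN'⟩, fun i => ⟨Q i - X ^ m i, hlt i⟩⟩, rfl, fun i => add_sub_cancel _ _⟩

variable [Fintype ι]

lemma card_eq (n : ℕ) (m : ι → ℕ) :
    Nat.card (FractionParam F n m) = Nat.card F ^ (n + 1 + ∑ i, m i) := by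
  have hcard (k : ℕ) : Nat.card (degreeLT F k) = Nat.card F ^ k := by
    rw [Nat.card_congr (degreeLTEquiv F k).toEquiv, Nat.card_fun, Nat.card_fin]
  simp only [Nat.card_prod, Nat.card_pi, hcard, Finset.prod_pow_eq_pow_sum, pow_add]

/-- The rational function `N / ∏ i, Q i ^ e i` given by a point of the parameter space. -/
noncomputable def toRatFunc (e : ι → ℕ) (x : FractionParam F n m) : RatFunc F :=
  algebraMap F[X] (RatFunc F) x.1 / algebraMap F[X] (RatFunc F) (∏ i, x.factor i ^ e i)

/-- The points whose factors are separable and pairwise coprime and whose numerator is coprime to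
all factors. The separability of a factor and its coprimality to the others are merged into a single
coprimality condition. -/
def IsGeneric [DecidableEq ι] (x : FractionParam F n m) : Prop :=
  IsCoprime x.1.1 (∏ i, x.factor i) ∧
    ∀ i, IsCoprime (x.factor i) (derivative (x.factor i) * ∏ j ∈ Finset.univ.erase i, x.factor j)

lemma card_mul_ncard_num_not_isCoprime_le [Finite F] :
    Nat.card F * {x : FractionParam F n m | ¬IsCoprime x.1.1 (∏ i, x.factor i)}.ncard ≤
      Nat.card (FractionParam F n m) * ∑ i, m i := by
  let shift (c : F) : FractionParam F n m := (⟨C c, C_mem_degreeLT n.succ_ne_zero c⟩, 0)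
  have hfactor (x : FractionParam F n m) (c : F) (i : ι) : (x + shift c).factor i = x.factor i := by
    simp [shift, factor]
  refine card_mul_ncard_not_isCoprime_le (s := shift) (fun x c => rfl) (fun x c => ?_)
    (fun x => (monic_prod_of_monic _ _ fun i _ => monic_factor x i).ne_zero)
    fun x => (natDegree_prod_factor x _).le
  simp only [hfactor]

lemma card_mul_ncard_factor_not_isCoprime_le [Finite F] [DecidableEq ι] (i : ι)
    (hm : (m i : F) ≠ 0) :
    Nat.card F * {x : FractionParam F n m | ¬IsCoprime (x.factor i)
        (derivative (x.factor i) * ∏ j ∈ Finset.univ.erase i, x.factor j)}.ncard ≤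
      Nat.card (FractionParam F n m) * ∑ i, m i := by
  have hm0 : m i ≠ 0 := fun h => hm (by rw [h, Nat.cast_zero])
  let shift (c : F) : FractionParam F n m := (0, Pi.single i ⟨C c, C_mem_degreeLT hm0 c⟩)
  have hfactor_same (x : FractionParam F n m) (c : F) :
      (x + shift c).factor i = x.factor i + C c := by
    simp [shift, factor, add_assoc]
  have hfactor_ne (x : FractionParam F n m) (c : F) {j : ι} (hj : j ≠ i) :
      (x + shift c).factor j = x.factor j := by
    simp [shift, factor, hj]
  refine card_mul_ncard_not_isCoprime_le hfactor_same (fun x c => ?_) (fun x => ?_) fun x => ?_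
  · rw [hfactor_same, derivative_add, derivative_C, add_zero]
    congr 1
    exact Finset.prod_congr rfl fun j hj => hfactor_ne x c (Finset.ne_of_mem_erase hj)
  · refine mul_ne_zero (derivative_ne_zero_of_monic (x.monic_factor i) ?_)
      (monic_prod_of_monic _ _ fun j _ => x.monic_factor j).ne_zero
    rwa [natDegree_factor]
  · calc (derivative (x.factor i) * ∏ j ∈ Finset.univ.erase i, x.factor j).natDegree
      _ ≤ (derivative (x.factor i)).natDegree + ∑ j ∈ Finset.univ.erase i, m j :=
        natDegree_mul_le_of_le le_rfl (x.natDegree_prod_factor _).le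
      _ ≤ m i + ∑ j ∈ Finset.univ.erase i, m j := by
        gcongr
        exact (natDegree_derivative_le _).trans ((Nat.sub_le _ _).trans (x.natDegree_factor i).le)
      _ = ∑ j, m j := Finset.add_sum_erase _ _ (Finset.mem_univ i)

lemma card_mul_ncard_not_isGeneric_le [Finite F] [DecidableEq ι] (hm : ∀ i, (m i : F) ≠ 0) :
    Nat.card F * {x : FractionParam F n m | ¬x.IsGeneric}.ncard ≤
      Nat.card (FractionParam F n m) * ((Fintype.card ι + 1) * ∑ i, m i) := by
  have hsubset : {x : FractionParam F n m | ¬x.IsGeneric} ⊆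
      {x | ¬IsCoprime x.1.1 (∏ i, x.factor i)} ∪ ⋃ i, {x | ¬IsCoprime (x.factor i)
        (derivative (x.factor i) * ∏ j ∈ Finset.univ.erase i, x.factor j)} := by
    intro x hx
    simp only [Set.mem_union, Set.mem_iUnion, Set.mem_ofPred_eq]
    simpa only [Set.mem_ofPred_eq, IsGeneric, not_and_or, not_forall] using hx
  calc Nat.card F * {x : FractionParam F n m | ¬x.IsGeneric}.ncard
    _ ≤ Nat.card F * ({x : FractionParam F n m | ¬IsCoprime x.1.1 (∏ i, x.factor i)}.ncard +
          ∑ i, {x : FractionParam F n m | ¬IsCoprime (x.factor i)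
            (derivative (x.factor i) * ∏ j ∈ Finset.univ.erase i, x.factor j)}.ncard) := by
      gcongr
      refine (Set.ncard_le_ncard hsubset).trans ((Set.ncard_union_le _ _).trans ?_)
      gcongr
      exact Set.ncard_iUnion_le_of_fintype _
    _ ≤ Nat.card (FractionParam F n m) * ∑ i, m i +
          ∑ _i : ι, Nat.card (FractionParam F n m) * ∑ i, m i := by
      rw [mul_add, Finset.mul_sum]
      exact add_le_add card_mul_ncard_num_not_isCoprime_le <|
        Finset.sum_le_sum fun i _ => card_mul_ncard_factor_not_isCoprime_le i (hm i)
    _ = Nat.card (FractionParam F n m) * ((Fintype.card ι + 1) * ∑ i, m i) := by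
      rw [Finset.sum_const, Finset.card_univ, smul_eq_mul]
      ring

end FractionParam

end Parametrization

section PoleOrders

variable {F : Type*} [Field F]

open Classical in
/-- The multiset of the orders of the finite poles of a rational function over an algebraic closure
of its field of constants. -/
noncomputable def poleOrders (f : RatFunc F) : Multiset ℕ :=
  multiplicityType (f.denom.map (algebraMap F (AlgebraicClosure F)))

lemma zero_notMem_poleOrders (f : RatFunc F) : 0 ∉ poleOrders f := by
  classical exact zero_notMem_multiplicityType _

lemma sum_poleOrders (f : RatFunc F) : (poleOrders f).sum = f.denom.natDegree := by
  classical
  rw [poleOrders, sum_multiplicityType (IsAlgClosed.splits _), natDegree_map]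

theorem admissibleData_baseChange_iff {p d r : ℕ} (hp : d + 1 < p) (f : RatFunc F) :
    AdmissibleData p (f.baseChange (algebraMap F (AlgebraicClosure F))) d r ↔
      f.intDegree ≤ 0 ∧ (poleOrders f).card = r + 1 ∧
        (poleOrders f).sum + (poleOrders f).card = d + 2 := by
  classical
  rw [admissibleData_iff hp, intDegree_baseChange, (num_denom_baseChange _ f).2, poleOrders]

/-- The rational functions over `F` without pole at infinity whose finite poles have orders `M`. -/
def ratFuncsWithPoleOrders (F : Type*) [Field F] (M : Multiset ℕ) : Set (RatFunc F) :=
  {f | f.intDegree ≤ 0 ∧ poleOrders f = M}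

namespace FractionParam

variable {ι : Type*} [Fintype ι] {n : ℕ} {m : ι → ℕ}

lemma IsGeneric.num_denom_toRatFunc [DecidableEq ι] {x : FractionParam F n m} (hx : x.IsGeneric)
    (e : ι → ℕ) : (x.toRatFunc e).num = x.1 ∧ (x.toRatFunc e).denom = ∏ i, x.factor i ^ e i :=
  num_denom_div_of_isCoprime
    (.prod_right fun i _ => (IsCoprime.prod_right_iff.1 hx.1 i (Finset.mem_univ i)).pow_right)
    (monic_prod_of_monic _ _ fun i _ => (x.monic_factor i).pow _)

lemma IsGeneric.separable_map_factor [DecidableEq ι] {x : FractionParam F n m}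
    (hx : x.IsGeneric) {K : Type*} [Field K] (φ : F →+* K) (i : ι) :
    ((x.factor i).map φ).Separable :=
  Separable.map (hx.2 i).of_mul_right_left

lemma IsGeneric.pairwise_isCoprime_map_factor [DecidableEq ι] {x : FractionParam F n m}
    (hx : x.IsGeneric) {K : Type*} [Field K] (φ : F →+* K) :
    Pairwise fun i j => IsCoprime ((x.factor i).map φ) ((x.factor j).map φ) := fun i j hij =>
  (isCoprime_map φ).2 <| IsCoprime.prod_right_iff.1 (hx.2 i).of_mul_right_right j <|
    Finset.mem_erase.2 ⟨hij.symm, Finset.mem_univ j⟩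

lemma IsGeneric.poleOrders_toRatFunc [DecidableEq ι] {x : FractionParam F n m} (hx : x.IsGeneric)
    {e : ι → ℕ} (he : ∀ i, e i ≠ 0) : poleOrders (x.toRatFunc e) = ∑ i, m i • {e i} := by
  classical
  rw [poleOrders, (hx.num_denom_toRatFunc e).2, Polynomial.map_prod]
  simp only [Polynomial.map_pow]
  rw [multiplicityType_prod_pow (fun i => IsAlgClosed.splits _) (hx.separable_map_factor _)
    (hx.pairwise_isCoprime_map_factor _) he]
  simp only [natDegree_map, natDegree_factor]

lemma injOn_toRatFunc [DecidableEq ι] {e : ι → ℕ} (he : ∀ i, e i ≠ 0) (he_inj : e.Injective) :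
    Set.InjOn (toRatFunc e) {x : FractionParam F n m | x.IsGeneric} := by
  classical
  intro x hx y hy hxy
  refine eq_of_factor_eq ?_ fun i => map_injective (algebraMap F (AlgebraicClosure F))
    (algebraMap F (AlgebraicClosure F)).injective ?_
  · rw [← (hx.num_denom_toRatFunc e).1, hxy, (hy.num_denom_toRatFunc e).1]
  have hfactor {z : FractionParam F n m} (hz : z.IsGeneric) : (z.factor i).map
      (algebraMap F (AlgebraicClosure F)) = multiplicityFactor
        ((z.toRatFunc e).denom.map (algebraMap F (AlgebraicClosure F))) (e i) := by
    rw [(hz.num_denom_toRatFunc e).2, Polynomial.map_prod]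
    simp only [Polynomial.map_pow]
    rw [multiplicityFactor_prod_pow (fun j => (z.monic_factor j).map _)
      (fun j => IsAlgClosed.splits _) (hz.separable_map_factor _)
      (hz.pairwise_isCoprime_map_factor _) he he_inj]
  rw [hfactor hx, hfactor hy, hxy]

lemma IsGeneric.intDegree_toRatFunc_nonpos [DecidableEq ι] {e : ι → ℕ} (hn : n ≤ ∑ i, e i * m i)
    {x : FractionParam F n m} (hx : x.IsGeneric) : (x.toRatFunc e).intDegree ≤ 0 := by
  have hnum : x.1.1.natDegree ≤ n :=
    natDegree_le_iff_degree_le.2 (Order.lt_succ_iff.1 (mem_degreeLT.1 x.1.2))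
  rw [RatFunc.intDegree, (hx.num_denom_toRatFunc e).1, (hx.num_denom_toRatFunc e).2,
    natDegree_prod_of_monic _ _ fun i _ => (x.monic_factor i).pow _]
  simp only [natDegree_pow, natDegree_factor]
  exact sub_nonpos.2 (Nat.cast_le.2 (hnum.trans hn))

end FractionParam

/-- The parameter space of `ratFuncsWithPoleOrders F M`: such a fraction has one monic factor for
each `e ∈ M`, of degree the multiplicity of `e` in `M`, collecting the poles of order `e`. -/
abbrev PoleOrderParam (F : Type*) [Field F] (M : Multiset ℕ) : Type _ :=
  FractionParam F M.sum fun e : M.toFinset => M.count e.1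

lemma card_poleOrderParam (F : Type*) [Field F] (M : Multiset ℕ) :
    Nat.card (PoleOrderParam F M) = Nat.card F ^ (M.sum + M.card + 1) := by
  rw [FractionParam.card_eq, Finset.sum_coe_sort M.toFinset fun e => M.count e,
    Multiset.toFinset_sum_count_eq]
  ring_nf

lemma exists_prod_pow_eq_denom [PerfectField F] (f : RatFunc F) :
    ∃ Q : ℕ → F[X], (∀ e, (Q e).Monic) ∧ (∀ e, (Q e).natDegree = (poleOrders f).count e) ∧
      ∏ e ∈ (poleOrders f).toFinset, Q e ^ e = f.denom := by
  classical
  exact exists_prod_pow_eq_of_splits_map f.monic_denom (IsAlgClosed.splits _)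

lemma ratFuncsWithPoleOrders_subset_range [PerfectField F] (M : Multiset ℕ) :
    ratFuncsWithPoleOrders F M ⊆ Set.range fun x : PoleOrderParam F M => x.toRatFunc (·.1) := by
  rintro f ⟨hdeg, rfl⟩
  have hnum : f.num.natDegree ≤ (poleOrders f).sum := by
    rw [sum_poleOrders]
    exact Nat.cast_le.1 (sub_nonpos.1 hdeg)
  obtain ⟨Q, hQ, hQ_deg, hprod⟩ := exists_prod_pow_eq_denom f
  obtain ⟨x, hx, hx_factor⟩ := FractionParam.exists_factor_eq hnum
    (fun e : (poleOrders f).toFinset => hQ e) fun e => hQ_deg e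
  refine ⟨x, ?_⟩
  simp only [FractionParam.toRatFunc, hx, hx_factor]
  rw [Finset.prod_coe_sort _ fun e => Q e ^ e, hprod, f.num_div_denom]

lemma finite_ratFuncsWithPoleOrders [Finite F] (M : Multiset ℕ) :
    (ratFuncsWithPoleOrders F M).Finite :=
  (Set.finite_range _).subset (ratFuncsWithPoleOrders_subset_range M)

lemma ncard_ratFuncsWithPoleOrders_le [Finite F] (M : Multiset ℕ) :
    (ratFuncsWithPoleOrders F M).ncard ≤ Nat.card F ^ (M.sum + M.card + 1) := by
  rw [← card_poleOrderParam]
  refine (Set.ncard_le_ncard (ratFuncsWithPoleOrders_subset_range M) (Set.finite_range _)).trans ?_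
  rw [← Set.image_univ, ← Set.ncard_univ]
  exact Set.ncard_image_le

lemma toRatFunc_mem_ratFuncsWithPoleOrders {M : Multiset ℕ} (hM : 0 ∉ M)
    {x : PoleOrderParam F M} (hx : x.IsGeneric) :
    x.toRatFunc (·.1) ∈ ratFuncsWithPoleOrders F M := by
  refine ⟨hx.intDegree_toRatFunc_nonpos (le_of_eq ?_), ?_⟩
  · rw [Finset.sum_coe_sort M.toFinset fun e => e * M.count e, Finset.sum_multiset_count]
    simp only [smul_eq_mul, mul_comm]
  · rw [hx.poleOrders_toRatFunc fun e h0 => hM (h0 ▸ Multiset.mem_toFinset.1 e.2),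
      Finset.sum_coe_sort M.toFinset fun e => M.count e • ({e} : Multiset ℕ),
      Multiset.toFinset_sum_count_nsmul_eq]

lemma ncard_isGeneric_le_ncard_ratFuncsWithPoleOrders [Finite F] {M : Multiset ℕ} (hM : 0 ∉ M) :
    {x : PoleOrderParam F M | x.IsGeneric}.ncard ≤ (ratFuncsWithPoleOrders F M).ncard :=
  Set.ncard_le_ncard_of_injOn _ (fun _ => toRatFunc_mem_ratFuncsWithPoleOrders hM)
    (FractionParam.injOn_toRatFunc (fun e h0 => hM (h0 ▸ Multiset.mem_toFinset.1 e.2))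
      Subtype.val_injective)
    (finite_ratFuncsWithPoleOrders M)

lemma card_mul_pow_sub_ncard_ratFuncsWithPoleOrders_le [Finite F] {M : Multiset ℕ} (hM : 0 ∉ M)
    (hcount : ∀ e ∈ M, (M.count e : F) ≠ 0) :
    Nat.card F * (Nat.card F ^ (M.sum + M.card + 1) - (ratFuncsWithPoleOrders F M).ncard) ≤
      Nat.card F ^ (M.sum + M.card + 1) * ((M.card + 1) * M.card) := by
  have hbad : Nat.card F * {x : PoleOrderParam F M | ¬x.IsGeneric}.ncard ≤
      Nat.card F ^ (M.sum + M.card + 1) * ((M.toFinset.card + 1) * M.card) := by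
    have := FractionParam.card_mul_ncard_not_isGeneric_le (n := M.sum)
      fun e : M.toFinset => hcount e (Multiset.mem_toFinset.1 e.2)
    rwa [card_poleOrderParam, Fintype.card_coe,
      Finset.sum_coe_sort M.toFinset fun e => M.count e, Multiset.toFinset_sum_count_eq] at this
  have hcompl : {x : PoleOrderParam F M | x.IsGeneric}.ncard +
      {x : PoleOrderParam F M | ¬x.IsGeneric}.ncard = Nat.card F ^ (M.sum + M.card + 1) := by
    rw [← card_poleOrderParam]
    exact Set.ncard_add_ncard_compl _
  calc Nat.card F * (Nat.card F ^ (M.sum + M.card + 1) - (ratFuncsWithPoleOrders F M).ncard)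
    _ ≤ Nat.card F * {x : PoleOrderParam F M | ¬x.IsGeneric}.ncard := by
      gcongr
      have := ncard_isGeneric_le_ncard_ratFuncsWithPoleOrders (F := F) hM
      lia
    _ ≤ Nat.card F ^ (M.sum + M.card + 1) * ((M.toFinset.card + 1) * M.card) := hbad
    _ ≤ Nat.card F ^ (M.sum + M.card + 1) * ((M.card + 1) * M.card) := by
      gcongr
      exact Multiset.toFinset_card_le M

end PoleOrders

section WeightedProportion

variable {ι : Type*} {S U : Finset ι} {w : ι → ℝ} {Q δ : ℝ}

lemma card_div_card_sub_le_sum_div_sum (hU : U ⊆ S) (hQ : 0 < Q) (hδ : 0 ≤ δ)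
    (hw : ∀ i ∈ S, 0 ≤ w i) (hlower : ∀ i ∈ S, Q * (1 - δ) ≤ w i) (hupper : ∀ i ∈ S, w i ≤ Q) :
    (U.card / S.card - δ : ℝ) ≤ (∑ i ∈ U, w i) / ∑ i ∈ S, w i := by
  have hsum_nonneg : 0 ≤ ∑ i ∈ U, w i := Finset.sum_nonneg fun i hi => hw i (hU hi)
  have hratio_le_one : (U.card / S.card : ℝ) ≤ 1 :=
    div_le_one_of_le₀ (Nat.cast_le.2 (Finset.card_le_card hU)) (Nat.cast_nonneg _)
  rcases le_or_gt 1 δ with hδ_one | hδ_one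
  · exact (sub_nonpos.2 (hratio_le_one.trans hδ_one)).trans
      (div_nonneg hsum_nonneg (Finset.sum_nonneg hw))
  rcases S.eq_empty_or_nonempty with rfl | hS
  · simpa [Finset.subset_empty.1 hU] using hδ
  have hsum_pos : 0 < ∑ i ∈ S, w i :=
    Finset.sum_pos (fun i hi => (mul_pos hQ (sub_pos.2 hδ_one)).trans_le (hlower i hi)) hS
  calc (U.card / S.card - δ : ℝ)
    _ ≤ U.card / S.card * (1 - δ) := by
      linarith [mul_le_of_le_one_left hδ hratio_le_one]
    _ = U.card * (Q * (1 - δ)) / (S.card * Q) := by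
      field_simp
    _ ≤ (∑ i ∈ U, w i) / ∑ i ∈ S, w i := by
      refine div_le_div₀ hsum_nonneg ?_ hsum_pos ?_
      · simpa using Finset.card_nsmul_le_sum U w _ fun i hi => hlower i (hU hi)
      · simpa using Finset.sum_le_card_nsmul S w _ hupper

lemma abs_sum_div_sum_sub_card_div_card_le (hU : U ⊆ S) (hQ : 0 < Q) (hδ : 0 ≤ δ)
    (hw : ∀ i ∈ S, 0 ≤ w i) (hlower : ∀ i ∈ S, Q * (1 - δ) ≤ w i) (hupper : ∀ i ∈ S, w i ≤ Q) :
    |(∑ i ∈ U, w i) / ∑ i ∈ S, w i - U.card / S.card| ≤ δ := by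
  classical
  have hcompl := card_div_card_sub_le_sum_div_sum (Finset.sdiff_subset : S \ U ⊆ S) hQ hδ hw
    hlower hupper
  rw [Finset.cast_card_sdiff hU, Finset.sum_sdiff_eq_sub hU, sub_div, sub_div] at hcompl
  refine abs_sub_le_iff.2 ⟨?_, ?_⟩
  · rcases S.eq_empty_or_nonempty with rfl | hS
    · simpa using hδ
    rcases eq_or_ne (∑ i ∈ S, w i) 0 with hsum | hsum
    · rw [hsum, div_zero, zero_sub]
      exact (neg_nonpos.2 (by positivity)).trans hδ
    rw [div_self hsum, div_self (Nat.cast_ne_zero.2 hS.card_ne_zero)] at hcompl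
    linarith
  · linarith [card_div_card_sub_le_sum_div_sum hU hQ hδ hw hlower hupper]

end WeightedProportion

section PolePartition

variable {F : Type*} [Field F] {n : ℕ}

/-- The rational functions without pole at infinity whose finite poles have orders `i - 1`, for `i`
running through the parts of `P`. Parts equal to `1` would be spurious poles of order `0`. -/
def ratFuncsWithPolePartition (F : Type*) [Field F] (P : n.Partition) : Set (RatFunc F) :=
  ratFuncsWithPoleOrders F (P.parts.map (· - 1))

lemma map_succ_map_pred_parts (P : n.Partition) :
    (P.parts.map (· - 1)).map (· + 1) = P.parts := by
  rw [Multiset.map_map]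
  exact (Multiset.map_congr rfl fun i hi => Nat.sub_add_cancel (P.parts_pos hi)).trans
    (Multiset.map_id _)

lemma card_parts_ne_zero [NeZero n] (P : n.Partition) : P.parts.card ≠ 0 := by
  intro hcard
  have := P.parts_sum
  rw [Multiset.card_eq_zero.1 hcard, Multiset.sum_zero] at this
  exact NeZero.ne n this.symm

lemma sum_add_card_map_pred_parts (P : n.Partition) :
    (P.parts.map (· - 1)).sum + (P.parts.map (· - 1)).card = n := by
  conv_rhs => rw [← P.parts_sum, ← map_succ_map_pred_parts P, Multiset.sum_map_add]
  simp

theorem admissibleData_baseChange_iff_exists_partition {p d r : ℕ} (hp : d + 1 < p)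
    (f : RatFunc F) :
    AdmissibleData p (f.baseChange (algebraMap F (AlgebraicClosure F))) d r ↔
      ∃ P : (d + 2).Partition, (P.parts.card = r + 1 ∧ ∀ i ∈ P.parts, 2 ≤ i) ∧
        f ∈ ratFuncsWithPolePartition F P := by
  rw [admissibleData_baseChange_iff hp]
  constructor
  · rintro ⟨hdeg, hcard, hsum⟩
    refine ⟨⟨(poleOrders f).map (· + 1), ?_, ?_⟩, ⟨?_, ?_⟩, hdeg, ?_⟩
    · simp
    · rw [← hsum, Multiset.sum_map_add]
      simp
    · rw [Multiset.card_map, hcard]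
    · simp only [Multiset.mem_map]
      rintro _ ⟨e, he, rfl⟩
      have : e ≠ 0 := fun h => zero_notMem_poleOrders f (h ▸ he)
      lia
    · simp
  · rintro ⟨P, ⟨hcard, -⟩, hdeg, horders⟩
    refine ⟨hdeg, ?_, ?_⟩
    · rw [horders, Multiset.card_map, hcard]
    · rw [horders, sum_add_card_map_pred_parts]

lemma ncard_biUnion_ratFuncsWithPolePartition [Finite F] (S : Finset n.Partition) :
    (⋃ P ∈ S, ratFuncsWithPolePartition F P).ncard =
      ∑ P ∈ S, (ratFuncsWithPolePartition F P).ncard := by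
  have hdisjoint : (S : Set n.Partition).PairwiseDisjoint (ratFuncsWithPolePartition F) := by
    refine fun P _ P' _ hne => Set.disjoint_left.2 fun f hf hf' => hne (Nat.Partition.ext ?_)
    rw [← map_succ_map_pred_parts P, ← map_succ_map_pred_parts P', ← hf.2, ← hf'.2]
  have := Set.Finite.ncard_biUnion S.finite_toSet
    (fun P _ => finite_ratFuncsWithPoleOrders (F := F) (P.parts.map (· - 1))) hdisjoint
  rwa [finsum_mem_coe_finset] at this

lemma ncard_ratFuncsWithPolePartition_le [Finite F] (P : n.Partition) :
    (ratFuncsWithPolePartition F P).ncard ≤ Nat.card F ^ (n + 1) := by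
  conv_rhs => rw [← sum_add_card_map_pred_parts P]
  exact ncard_ratFuncsWithPoleOrders_le _

lemma le_ncard_ratFuncsWithPolePartition [Finite F] {p : ℕ} [CharP F p] (hp : n ≤ p)
    {P : n.Partition} (hP : ∀ i ∈ P.parts, 2 ≤ i) :
    (Nat.card F ^ (n + 1) * (1 - n * (n + 1) / Nat.card F) : ℝ) ≤
      (ratFuncsWithPolePartition F P).ncard := by
  set M := P.parts.map (· - 1) with hM_def
  have hM_size : M.sum + M.card = n := sum_add_card_map_pred_parts P
  have hM_pos : ∀ e ∈ M, 1 ≤ e := by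
    simp only [hM_def, Multiset.mem_map]
    rintro _ ⟨i, hi, rfl⟩
    exact Nat.le_sub_one_of_lt (hP i hi)
  have hM_card : M.card ≤ M.sum := by
    simpa using Multiset.card_nsmul_le_sum hM_pos
  have hcount (e : ℕ) (he : e ∈ M) : (M.count e : F) ≠ 0 := by
    have hpos := Multiset.count_pos.2 he
    have hle := M.count_le_card e
    rw [Ne, CharP.cast_eq_zero_iff F p]
    exact Nat.not_dvd_of_pos_of_lt hpos (by lia)
  have hdefect := card_mul_pow_sub_ncard_ratFuncsWithPoleOrders_le
    (fun h0 => absurd (hM_pos 0 h0) (by simp)) hcount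
  rw [hM_size] at hdefect
  replace hdefect : (Nat.card F * (Nat.card F ^ (n + 1) - (ratFuncsWithPoleOrders F M).ncard) : ℝ) ≤
      Nat.card F ^ (n + 1) * ((n + 1) * n) := by
    have hle : (ratFuncsWithPoleOrders F M).ncard ≤ Nat.card F ^ (n + 1) :=
      ncard_ratFuncsWithPolePartition_le P
    have hM_card_le : M.card ≤ n := by lia
    rw [← Nat.cast_pow, ← Nat.cast_sub hle]
    exact_mod_cast hdefect.trans (by gcongr)
  have hq : (0 : ℝ) < Nat.card F := Nat.cast_pos.2 Nat.card_pos
  rw [← mul_le_mul_iff_of_pos_left hq, ratFuncsWithPolePartition]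
  field_simp
  linarith

end PolePartition

section Counting

lemma TTotal_eq_card (d : ℕ) :
    TTotal d = Finset.card {P : (d + 2).Partition | ∀ i ∈ P.parts, 2 ≤ i} := by
  rw [TTotal, Finset.card_eq_sum_card_fiberwise (f := fun P => P.parts.card - 1)
    (t := Finset.range (d / 2 + 1))]
  · refine Finset.sum_congr rfl fun r _ => ?_
    rw [T, Finset.filter_filter]
    refine congrArg Finset.card (Finset.filter_congr fun P _ => ?_)
    have := card_parts_ne_zero P
    rw [and_comm]
    exact and_congr_right fun _ => by lia
  · intro P hP
    have hcard : P.parts.card * 2 ≤ d + 2 := by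
      simpa [P.parts_sum] using Multiset.card_nsmul_le_sum (Finset.mem_filter.1 hP).2
    simp only [Finset.coe_range, Set.mem_Iio]
    lia

variable {F : Type} [Field F] [Finite F] {p d : ℕ}

lemma SCount_eq_sum (hp : d + 1 < p) (r : ℕ) :
    SCount p d r F = ∑ P : (d + 2).Partition with P.parts.card = r + 1 ∧ ∀ i ∈ P.parts, 2 ≤ i,
      (ratFuncsWithPolePartition F P).ncard := by
  rw [← ncard_biUnion_ratFuncsWithPolePartition, SCount]
  refine congrArg Set.ncard (Set.ext fun f => ?_)
  refine (admissibleData_baseChange_iff_exists_partition hp f).trans ?_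
  simp

lemma STotal_eq_sum (hp : d + 1 < p) :
    STotal p d F = ∑ P : (d + 2).Partition with ∀ i ∈ P.parts, 2 ≤ i,
      (ratFuncsWithPolePartition F P).ncard := by
  rw [← ncard_biUnion_ratFuncsWithPolePartition, STotal]
  refine congrArg Set.ncard (Set.ext fun f => ?_)
  refine (exists_congr fun r => admissibleData_baseChange_iff_exists_partition hp f).trans ?_
  have hcard (P : (d + 2).Partition) : ∃ r, P.parts.card = r + 1 :=
    Nat.exists_eq_succ_of_ne_zero (card_parts_ne_zero P)
  rw [exists_comm]
  simp only [exists_and_right, hcard, true_and, Finset.mem_filter_univ, Set.mem_iUnion, exists_prop]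

theorem abs_SCount_div_STotal_sub_le [CharP F p] (hp : d + 1 < p) (r : ℕ) :
    |(SCount p d r F : ℝ) / STotal p d F - (T d r : ℝ) / TTotal d| ≤
      (d + 2) * (d + 3) / Nat.card F := by
  have hq : (0 : ℝ) < Nat.card F := Nat.cast_pos.2 Nat.card_pos
  rw [SCount_eq_sum hp, STotal_eq_sum hp, TTotal_eq_card, T, Nat.cast_sum, Nat.cast_sum]
  refine abs_sum_div_sum_sub_card_div_card_le (Q := Nat.card F ^ (d + 3))
    (Finset.monotone_filter_right _ fun P _ hP => hP.2) (by positivity) (by positivity)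
    (fun P _ => Nat.cast_nonneg _) (fun P hP => ?_) (fun P _ => ?_)
  · convert le_ncard_ratFuncsWithPolePartition (F := F) hp (Finset.mem_filter.1 hP).2 using 5 <;>
      push_cast <;> ring
  · exact_mod_cast ncard_ratFuncsWithPolePartition_le P

end Counting

theorem arithmetic_p_rank_statistics_general (d r : ℕ) :
    ∀ ε : ℝ, 0 < ε → ∃ N : ℕ, ∀ p : ℕ, d + 1 < p →
      ∀ (F : Type) [Field F] [Finite F] [CharP F p], N ≤ Nat.card F →
        |(SCount p d r F : ℝ) / (STotal p d F) - (T d r : ℝ) / (TTotal d)| < ε := by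
  intro ε hε
  obtain ⟨N, hN⟩ := exists_nat_gt ((d + 2) * (d + 3) / ε : ℝ)
  refine ⟨N, fun p hp F _ _ _ hF => (abs_SCount_div_STotal_sub_le hp r).trans_lt ?_⟩
  have hq : (0 : ℝ) < Nat.card F := Nat.cast_pos.2 Nat.card_pos
  rw [div_lt_comm₀ hq hε]
  exact hN.trans_le (Nat.cast_le.2 hF)

/-- **Arithmetic problem** (Theorem `last main theorem`): fix `d > 0` and `0 ≤ r ≤ ⌊d/2⌋`.
As the prime `p → ∞`, with `g = d(p-1)/2` and `τ = r(p-1)`, the proportion of admissible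
rational functions over `F_p` (any field with `p` elements) of genus `g` whose
Artin–Schreier cover has `p`-rank `τ` converges to `T(r+1, d+2) / T(d+2)`. -/
theorem arithmetic_p_rank_statistics (d r : ℕ) (hd : 0 < d) (hr : r ≤ d / 2) :
    ∀ ε : ℝ, 0 < ε → ∃ N : ℕ, ∀ p : ℕ, p.Prime → N ≤ p →
      ∀ (F : Type) [Field F] [Fintype F], Fintype.card F = p →
        |(SCount p d r F : ℝ) / (STotal p d F) - (T d r : ℝ) / (TTotal d)| < ε := by
  intro ε hε
  obtain ⟨N, hN⟩ := arithmetic_p_rank_statistics_general d r ε hε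
  refine ⟨max N (d + 2), fun p hp hNp F _ _ hF => ?_⟩
  have : Fact p.Prime := ⟨hp⟩
  have : CharP F p := charP_of_card_eq_prime hF
  exact hN p (le_of_max_le_right hNp) F <|
    Nat.card_eq_fintype_card.trans hF ▸ le_of_max_le_left hNp
end
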